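/- arXiv:1512.09174 — 5 statements merged into one kernel-verified Lean document; each statement's English description precedes it below -/
import Mathlib

section
/- Suppose f satisfies (H) and (H') with constants μ, β, σ > 0, and β < σ/(2 + μ/σ). Let γ > 0 satisfy γ + β/σ < 1 and β ≤ (σ - (σ+μ)γ)/(2 + μ/σ). Then the equation x'(t) = f(x(t-1)) has an SOP solution p possessing a zero z such that the segment s ↦ p(z + 1 + s), s ∈ [-1,0], belongs to K (with M = μ) and satisfies p(z + 1 + s) > σs + σ(1-γ) for all s ∈ [-1+γ, -β/σ]. -/
/-!
A slowly oscillating periodic solution is a positive hump `U` on `[0, z]` followed by a negative hump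
`-V` of length `w`, repeated with period `z + w`.  On the first unit of time each hump is driven by
the final part of the other one, afterwards by its own past.  Write `b = β / σ`; the hypothesis
on `β` becomes `2 σ b + μ b < σ`.

Humps are described by a closed convex set of conditions (`IsHump`): `μ`-Lipschitz, nondecreasing on
`[0, 1]` with `U t ≥ σ t` for `t ≤ 1 - b`, nonincreasing on `[1, 1 + b]`, at least `σ b` at `1 + b`,
and of slope at most `-σ` later.  A hump has a zero `z ≥ 1 + b`, it is at least `σ b = β` on
`[b, z - b]`, and `z` depends continuously on the hump because zero is crossed with speed at
least `σ`.  Given a pair of humps `(u, v)`, both are replaced by the primitives of the slopes that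
the delay equation prescribes (`humpSlope`), where in the term for a hump's own past its value
`v t` is raised to `min (σ b) (σ t)` if necessary.  The bound `β` is exceeded by the history except
during a time `b` at either end, and `|f|` lies between `σ` and `μ` there, so the new functions are
humps again (`isHump_step`); the value at `1 + b` is at least `σ (1 - b) - μ b ≥ σ b`.  This map is
continuous for uniform convergence, and the set of humps on `[0, L]` is compact and convex, so
Schauder's theorem gives a fixed pair.  At a fixed pair the cut-off is inactive up to the zeros
(`humpSlope_of_isHump`), hence the two humps solve the delay equation and concatenate to an SOP
solution (`exists_isSOP_of_humps`).  The segment following an upward zero is the beginning of a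
hump, so the inequality `U t ≥ σ t` is stronger than the claimed one.

Schauder's theorem is deduced from Brouwer's by projecting onto simplices spanned by finite
`ε`-nets, and Brouwer's theorem from the no-retraction theorem, proved by the volume argument of
Milnor and Rogers: the volume of the image of the ball under `x ↦ x + t v x` is polynomial in `t`.
-/

open Set Filter

/-- Hypotheses (H): `f` is continuous, satisfies the negative feedback condition,
and is differentiable on a neighborhood of `0` with `f'(0) < 0`. -/
def HypH (f : ℝ → ℝ) : Prop :=
  Continuous f ∧ (∀ x : ℝ, x ≠ 0 → x * f x < 0) ∧
    (∀ᶠ y in nhds (0 : ℝ), DifferentiableAt ℝ f y) ∧ deriv f 0 < 0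

/-- A solution on `[-1,∞)` of the delay equation `x'(t) = f (x (t-1))`. -/
def IsSolOn (f x : ℝ → ℝ) : Prop :=
  ContinuousOn x (Ici (-1)) ∧ ∀ t : ℝ, 0 < t → HasDerivAt x (f (x (t - 1))) t

/-- Membership in the set `K`: `φ(-1) = 0`, `φ` nondecreasing on `[-1,0]`,
continuous there, and `|φ| ≤ M`. -/
def MemK (M : ℝ) (φ : ℝ → ℝ) : Prop :=
  ContinuousOn φ (Icc (-1) 0) ∧ φ (-1) = 0 ∧ MonotoneOn φ (Icc (-1) 0) ∧
    ∀ s ∈ Icc (-1 : ℝ) 0, |φ s| ≤ M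

/-- `T` is the minimal (positive) period of `p`. -/
def MinPeriod {α : Type*} (p : ℝ → α) (T : ℝ) : Prop :=
  0 < T ∧ (∀ t, p (t + T) = p t) ∧
    ∀ T' : ℝ, 0 < T' → (∀ t, p (t + T') = p t) → T ≤ T'

/-- A slowly oscillating periodic (SOP) solution of `x'(t) = f (x (t-1))`:
a nonconstant periodic differentiable solution any two of whose distinct
zeros are separated by more than `1`. -/
def IsSOP (f p : ℝ → ℝ) : Prop :=
  (∀ t : ℝ, HasDerivAt p (f (p (t - 1))) t) ∧
    (∃ T : ℝ, 0 < T ∧ ∀ t, p (t + T) = p t) ∧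
    (∃ t s : ℝ, p t ≠ p s) ∧
    ∀ z z' : ℝ, p z = 0 → p z' = 0 → z ≠ z' → 1 < |z - z'|

/-- A Kaplan–Yorke solution: an SOP solution of minimal period `4`
satisfying `x(t) = -x(t-2)`. -/
def IsKY (f x : ℝ → ℝ) : Prop :=
  IsSOP f x ∧ MinPeriod x 4 ∧ ∀ t : ℝ, x t = -x (t - 2)

/-- Hypotheses (H') with constants `μ, β, σ`. -/
def HypH' (f : ℝ → ℝ) (μ β σ : ℝ) : Prop :=
  (∀ x : ℝ, |f x| ≤ μ) ∧ ∀ x : ℝ, β ≤ |x| → σ ≤ |f x|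

/-- Hypotheses (H'') with constants `a, c, δ, γ`. -/
def HypH'' (f : ℝ → ℝ) (a c δ γ : ℝ) : Prop :=
  (∀ x : ℝ, f (-x) = -f x) ∧ (∀ x ∈ Icc (0 : ℝ) (2 * a), |f x| ≤ γ) ∧
    (∀ x ∈ Icc a (2 * a - c), f x = -γ) ∧ ∀ x ∈ Icc (2 * a) γ, f x = -δ

/-- The minimal period of `p` equals `z'' - z` for three consecutive zeros
`z < z' < z''` of `p`. -/
def PeriodThreeZeros (p : ℝ → ℝ) : Prop :=
  ∃ z z' z'' : ℝ, z < z' ∧ z' < z'' ∧ p z = 0 ∧ p z' = 0 ∧ p z'' = 0 ∧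
    (∀ t, t ∈ Ioo z z' ∪ Ioo z' z'' → p t ≠ 0) ∧ MinPeriod p (z'' - z)

/-! ### The fixed point theorems of Brouwer and Schauder -/

section Brouwer

open MeasureTheory Polynomial

variable {E : Type*} [NormedAddCommGroup E] [InnerProductSpace ℝ E] [FiniteDimensional ℝ E]

/-- For a fixed endomorphism `A`, `t ↦ det (1 + t A)` is polynomial of degree at most `dim E`. -/
lemma exists_polynomial_det (A : E →L[ℝ] E) :
    ∃ P : ℝ[X], P.natDegree ≤ Module.finrank ℝ E ∧
      ∀ t : ℝ, P.eval t = (ContinuousLinearMap.id ℝ E + t • A).det := by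
  classical
  let b := Module.finBasis ℝ E
  let M := LinearMap.toMatrix b b (A : E →ₗ[ℝ] E)
  refine ⟨_, (natDegree_det_X_add_C_le M 1).trans (by simp), fun t => ?_⟩
  rw [ContinuousLinearMap.det, ← LinearMap.det_toMatrix b, ← coe_evalRingHom, RingHom.map_det]
  congr 1
  ext i j
  simp [M, LinearMap.toMatrix_apply, Matrix.one_apply, Finsupp.single_apply]
  split_ifs <;> simp_all [add_comm, mul_comm]

/-- Interpolation at `dim E + 1` nodes in `(0, δ)` evaluates `det (1 + A)` from the values
`det (1 + t A)` at small `t`, with weights that do not depend on `A` and add up to `1`. -/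
lemma exists_det_interpolation (δ : ℝ) (hδ : 0 < δ) :
    ∃ (n : ℕ) (t c : Fin n → ℝ), (∀ i, 0 < t i ∧ t i < δ) ∧ ∑ i, c i = 1 ∧
      ∀ A : E →L[ℝ] E, (ContinuousLinearMap.id ℝ E + A).det =
        ∑ i, c i * (ContinuousLinearMap.id ℝ E + t i • A).det := by
  let n := Module.finrank ℝ E + 1
  let t : Fin n → ℝ := fun i => δ / (i + 2)
  have ht : Set.InjOn t (Finset.univ : Finset (Fin n)) := by
    intro i _ j _ h
    have h1 : ((i : ℕ) : ℝ) + 2 ≠ 0 := by positivity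
    have h2 : ((j : ℕ) : ℝ) + 2 ≠ 0 := by positivity
    simp only [t] at h
    field_simp at h
    have : ((i : ℕ) : ℝ) = (j : ℕ) := by linarith
    exact Fin.ext (by exact_mod_cast this)
  refine ⟨n, t, fun i => (Lagrange.basis Finset.univ t i).eval 1, fun i => ⟨by positivity, ?_⟩, ?_,
    fun A => ?_⟩
  · have h0 : (0 : ℝ) ≤ (i : ℕ) := by positivity
    rw [div_lt_iff₀ (by positivity)]
    nlinarith
  · rw [← eval_finsetSum, Lagrange.sum_basis ht Finset.univ_nonempty, eval_one]
  · obtain ⟨P, hP, hPt⟩ := exists_polynomial_det A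
    have h1 := Lagrange.eq_interpolate (f := P) ht (by
      refine degree_le_natDegree.trans_lt ?_
      simp only [Finset.card_univ, Fintype.card_fin, n]
      exact_mod_cast Nat.lt_succ_of_le hP)
    have h2 := hPt 1
    rw [one_smul] at h2
    rw [← h2, h1, Lagrange.interpolate_apply, eval_finsetSum]
    simp [hPt, mul_comm]

/-- No-retraction theorem in displacement form: `x ↦ x + v x` cannot map the open unit ball to the
sphere when `v` is Lipschitz, differentiable on the ball, and vanishes off it.  For small `t` the
map `x ↦ x + t v x` is a bijection of the ball, so `∫ det (1 + t Dv)` is the volume of the ball;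
this integral is polynomial in `t`, while at `t = 1` the determinant vanishes. -/
lemma no_retraction (v : E → E) (L : NNReal) (hL : LipschitzWith L v)
    (hv0 : ∀ x, x ∉ Metric.ball (0 : E) 1 → v x = 0)
    (hd : ∀ x ∈ Metric.ball (0 : E) 1, DifferentiableAt ℝ v x)
    (h1 : ∀ x ∈ Metric.ball (0 : E) 1, ‖x + v x‖ = 1) : False := by
  borelize E
  let vol : Measure E := Measure.addHaar
  set B := Metric.ball (0 : E) 1 with hB
  have hBm : MeasurableSet B := Metric.isOpen_ball.measurableSet
  -- determinants near the identity are positive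
  have hpos : ∃ δ > 0, ∀ C : E →L[ℝ] E, ‖C‖ < δ → 0 < (ContinuousLinearMap.id ℝ E + C).det := by
    have hc : ContinuousAt (fun C : E →L[ℝ] E => (ContinuousLinearMap.id ℝ E + C).det) 0 :=
      (ContinuousLinearMap.continuous_det.comp (continuous_const.add continuous_id)).continuousAt
    have h0 : (0 : ℝ) < (ContinuousLinearMap.id ℝ E + 0).det := by
      simp [ContinuousLinearMap.det]
    obtain ⟨δ, hδ, h⟩ := Metric.eventually_nhds_iff.1 (hc.eventually (lt_mem_nhds h0))
    exact ⟨δ, hδ, fun C hC => h (by simpa using hC)⟩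
  obtain ⟨δ, hδ, hpos⟩ := hpos
  have hL0 : (0 : ℝ) < L + 1 := by positivity
  obtain ⟨n, t, c, ht, hc, hdet⟩ := exists_det_interpolation (E := E) (min δ 1 / (L + 1))
    (by positivity)
  have key : ∀ s : ℝ, 0 < s → s < min δ 1 / (L + 1) →
      IntegrableOn (fun x => (ContinuousLinearMap.id ℝ E + s • fderiv ℝ v x).det) B vol ∧
      ∫ x in B, (ContinuousLinearMap.id ℝ E + s • fderiv ℝ v x).det ∂vol = vol.real B := by
    intro s hs hs'
    rw [lt_div_iff₀ hL0] at hs'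
    have hsδ : s * L < δ := by nlinarith [min_le_left δ 1]
    have hs1 : s * L < 1 := by nlinarith [min_le_right δ 1]
    let F : E → E := fun x => x + s • v x
    have hF : ∀ x ∈ B, HasFDerivWithinAt F
        (ContinuousLinearMap.id ℝ E + s • fderiv ℝ v x) B x := fun x hx =>
      ((hasFDerivAt_id x).add ((hd x hx).hasFDerivAt.const_smul s)).hasFDerivWithinAt
    have hsv : ∀ x y, ‖s • v x - s • v y‖ ≤ s * L * ‖x - y‖ := by
      intro x y
      have := hL.dist_le_mul x y
      rw [dist_eq_norm, dist_eq_norm] at this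
      rw [← smul_sub, norm_smul, Real.norm_of_nonneg hs.le, mul_assoc]
      exact mul_le_mul_of_nonneg_left this hs.le
    have hinj : Function.Injective F := by
      intro x y hxy
      have h2 : x - y = s • v y - s • v x := by
        have : x + s • v x = y + s • v y := hxy
        rw [sub_eq_sub_iff_add_eq_add, this, add_comm]
      have h3 := hsv y x
      rw [← h2, norm_sub_rev y x] at h3
      have h4 : ‖x - y‖ ≤ 0 := by nlinarith [norm_nonneg (x - y)]
      exact sub_eq_zero.1 (norm_le_zero_iff.1 h4)
    have hsurj : Function.Surjective F := by
      intro y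
      have hcw : ContractingWith (s.toNNReal * L) (fun x => y - s • v x) := by
        refine ⟨?_, LipschitzWith.of_dist_le_mul fun a b => ?_⟩
        · rw [← NNReal.coe_lt_coe]
          simpa [Real.coe_toNNReal s hs.le] using hs1
        · rw [dist_eq_norm, dist_eq_norm, sub_sub_sub_cancel_left, norm_sub_rev a b]
          simpa [Real.coe_toNNReal s hs.le] using hsv b a
      refine ⟨_, eq_sub_iff_add_eq.1 (hcw.fixedPoint_isFixedPt).eq.symm⟩
    have hout : ∀ x, x ∉ B → F x = x := fun x hx => by simp [F, hv0 x hx]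
    have himg : F '' B = B := by
      ext y
      constructor
      · rintro ⟨x, hx, rfl⟩
        by_contra hy
        have := hinj (hout _ hy)
        exact hy (this.symm ▸ hx)
      · intro hy
        obtain ⟨x, rfl⟩ := hsurj y
        by_cases hx : x ∈ B
        · exact ⟨x, hx, rfl⟩
        · rw [hout x hx] at hy
          exact absurd hy hx
    have hdpos : ∀ x ∈ B, 0 < (ContinuousLinearMap.id ℝ E + s • fderiv ℝ v x).det := by
      intro x hx
      refine hpos _ ?_
      rw [norm_smul, Real.norm_of_nonneg hs.le]
      refine lt_of_le_of_lt ?_ hsδ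
      exact mul_le_mul_of_nonneg_left ((hd x hx).hasFDerivAt.le_of_lipschitz hL) hs.le
    have hcongr : EqOn (fun x => |(ContinuousLinearMap.id ℝ E + s • fderiv ℝ v x).det| • (1 : ℝ))
        (fun x => (ContinuousLinearMap.id ℝ E + s • fderiv ℝ v x).det) B := fun x hx => by
      simp [abs_of_pos (hdpos x hx)]
    have hfin : vol B ≠ ⊤ := measure_ball_lt_top.ne
    constructor
    · rw [← integrableOn_congr_fun hcongr hBm]
      refine (integrableOn_image_iff_integrableOn_abs_det_fderiv_smul vol hBm hF hinj.injOn
        (fun _ => (1 : ℝ))).1 ?_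
      rw [himg]
      exact integrableOn_const hfin
    · rw [← setIntegral_congr_fun hBm hcongr,
        ← integral_image_eq_integral_abs_det_fderiv_smul vol hBm hF hinj.injOn (fun _ => (1 : ℝ)),
        himg]
      simp
  have hzero : ∀ x ∈ B, (ContinuousLinearMap.id ℝ E + fderiv ℝ v x).det = 0 := by
    intro x hx
    by_contra hne
    set D := ContinuousLinearMap.id ℝ E + fderiv ℝ v x
    have hDer : HasFDerivAt (fun y => y + v y) D x :=
      (hasFDerivAt_id x).add (hd x hx).hasFDerivAt
    have hn := hDer.norm_sq
    have hcst : (fun y => ‖y + v y‖ ^ 2) =ᶠ[nhds x] fun _ => (1 : ℝ) := by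
      filter_upwards [Metric.isOpen_ball.mem_nhds hx] with y hy
      rw [h1 y hy]; norm_num
    have hz := hn.unique ((hasFDerivAt_const (1 : ℝ) x).congr_of_eventuallyEq hcst)
    obtain ⟨w, hw⟩ := (LinearMap.equivOfDetNeZero (D : E →ₗ[ℝ] E) hne).surjective (x + v x)
    have hw' : D w = x + v x := hw
    have := congrArg (fun A : E →L[ℝ] ℝ => A w) hz
    simp only [smul_apply, ContinuousLinearMap.comp_apply, hw',
      innerSL_apply_apply, real_inner_self_eq_norm_sq, h1 x hx] at this
    norm_num at this
  have hcalc : (0 : ℝ) = vol.real B := by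
    calc (0 : ℝ) = ∫ x in B, (ContinuousLinearMap.id ℝ E + fderiv ℝ v x).det ∂vol := by
          rw [setIntegral_congr_fun hBm hzero]; simp
      _ = ∫ x in B, ∑ i, c i * (ContinuousLinearMap.id ℝ E + t i • fderiv ℝ v x).det ∂vol := by
          simp_rw [← hdet]
      _ = ∑ i, c i * vol.real B := by
          rw [integral_finsetSum _ fun i _ => ((key (t i) (ht i).1 (ht i).2).1.const_mul (c i))]
          refine Finset.sum_congr rfl fun i _ => ?_
          rw [integral_const_mul, (key (t i) (ht i).1 (ht i).2).2]
      _ = vol.real B := by rw [← Finset.sum_mul, hc, one_mul]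
  have hvp : 0 < vol.real B :=
    ENNReal.toReal_pos (Metric.measure_ball_pos _ _ one_pos).ne' measure_ball_lt_top.ne
  linarith

/-- Brouwer's theorem for a `C¹` map with values in the closed unit ball.  A fixed-point-free `g`
would give the retraction sending `x` to the point where the ray from `g x` through `x` leaves
the ball; `v` is the displacement of that retraction, extended by `0`. -/
lemma brouwer_contDiff (g : E → E) (hg : ContDiff ℝ 1 g) (hb : ∀ x, ‖g x‖ ≤ 1) :
    ∃ x, g x = x := by
  by_contra! hne
  set d : E → E := fun x => x - g x with hd_def
  have hd : ContDiff ℝ 1 d := contDiff_id.sub hg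
  have hd0 : ∀ x, 0 < ‖d x‖ ^ 2 := fun x =>
    pow_pos (norm_pos_iff.2 (sub_ne_zero.2 (hne x).symm)) 2
  -- discriminant of the quadratic equation `‖x + s d‖ ^ 2 = 1` in `s`
  set Δ : E → ℝ := fun x => (inner ℝ x (d x)) ^ 2 + ‖d x‖ ^ 2 * (1 - ‖x‖ ^ 2) with hΔ
  have hΔc : ContDiff ℝ 1 Δ := by
    have h1 : ContDiff ℝ 1 fun x => inner ℝ x (d x) := contDiff_id.inner ℝ hd
    have h2 : ContDiff ℝ 1 fun x : E => ‖x‖ ^ 2 := contDiff_id.norm_sq ℝ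
    exact (h1.pow 2).add ((hd.norm_sq ℝ).mul (contDiff_const.sub h2))
  have hsph : ∀ x : E, ‖x‖ = 1 → 0 < inner ℝ x (d x) := by
    intro x hx
    have h1 : inner ℝ x (d x) = 1 - inner ℝ x (g x) := by
      simp [hd_def, inner_sub_right, hx]
    have h3 := hd0 x
    have h4 : ‖d x‖ ^ 2 = 1 - 2 * inner ℝ x (g x) + ‖g x‖ ^ 2 := by
      rw [hd_def, norm_sub_sq_real, hx]; ring
    have h5 : ‖g x‖ ^ 2 ≤ 1 := pow_le_one₀ (norm_nonneg _) (hb x)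
    rw [h1]; linarith
  have hΔpos : ∀ x ∈ Metric.closedBall (0 : E) 1, 0 < Δ x := by
    intro x hx
    have hx' : ‖x‖ ≤ 1 := by simpa using hx
    rcases hx'.lt_or_eq with h | h
    · have h1 : ‖x‖ ^ 2 < 1 := pow_lt_one₀ (norm_nonneg _) h two_ne_zero
      have h2 := mul_pos (hd0 x) (sub_pos.2 h1)
      have h3 := sq_nonneg (inner ℝ x (d x))
      simp only [hΔ]; linarith
    · have h1 := pow_pos (hsph x h) 2
      simp only [hΔ, h]; linarith
  set s : E → ℝ := fun x => (-inner ℝ x (d x) + √(Δ x)) / ‖d x‖ ^ 2 with hs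
  set w : E → E := fun x => s x • d x with hw
  have hwc : ∀ x ∈ Metric.closedBall (0 : E) 1, ContDiffAt ℝ 1 w x := by
    intro x hx
    have h1 : ContDiffAt ℝ 1 (fun x => inner ℝ x (d x)) x := (contDiff_id.inner ℝ hd).contDiffAt
    have h2 : ContDiffAt ℝ 1 (fun x => √(Δ x)) x := hΔc.contDiffAt.sqrt (hΔpos x hx).ne'
    exact ((h1.neg.add h2).div (hd.norm_sq ℝ).contDiffAt (hd0 x).ne').smul hd.contDiffAt
  have hwn : ∀ x ∈ Metric.closedBall (0 : E) 1, ‖x + w x‖ = 1 := by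
    intro x hx
    have h1 : ‖x + w x‖ ^ 2 = ‖x‖ ^ 2 + 2 * s x * inner ℝ x (d x) + s x ^ 2 * ‖d x‖ ^ 2 := by
      simp only [hw]
      rw [norm_add_sq_real, inner_smul_right, norm_smul, mul_pow, Real.norm_eq_abs, sq_abs]; ring
    have h2 : s x * ‖d x‖ ^ 2 = -inner ℝ x (d x) + √(Δ x) := div_mul_cancel₀ _ (hd0 x).ne'
    have h3 := Real.sq_sqrt (hΔpos x hx).le
    have h4 : (‖x + w x‖ ^ 2 - 1) * ‖d x‖ ^ 2 = 0 := by
      have : (‖x + w x‖ ^ 2 - 1) * ‖d x‖ ^ 2 = (s x * ‖d x‖ ^ 2) ^ 2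
          + 2 * inner ℝ x (d x) * (s x * ‖d x‖ ^ 2) + (‖x‖ ^ 2 - 1) * ‖d x‖ ^ 2 := by
        rw [h1]; ring
      rw [this, h2]
      have h5 : Δ x = (inner ℝ x (d x)) ^ 2 + ‖d x‖ ^ 2 * (1 - ‖x‖ ^ 2) := rfl
      nlinarith
    have h6 : ‖x + w x‖ ^ 2 = 1 :=
      sub_eq_zero.1 ((mul_eq_zero.1 h4).resolve_right (hd0 x).ne')
    exact (pow_eq_one_iff_of_nonneg (norm_nonneg _) two_ne_zero).1 h6
  have hws : ∀ x : E, ‖x‖ = 1 → w x = 0 := by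
    intro x hx
    have : s x = 0 := by
      simp only [hs, hΔ, hx]
      rw [one_pow, sub_self, mul_zero, add_zero, Real.sqrt_sq (hsph x hx).le]
      simp
    simp [hw, this]
  obtain ⟨L, hL⟩ := LocallyLipschitzOn.exists_lipschitzOnWith_of_compact
    (isCompact_closedBall (0 : E) 1)
    (ContDiffOn.locallyLipschitzOn (convex_closedBall 0 1)
      fun x hx => (hwc x hx).contDiffWithinAt)
  classical
  let v : E → E := fun x => if x ∈ Metric.closedBall (0 : E) 1 then w x else 0
  have hvw : ∀ x ∈ Metric.closedBall (0 : E) 1, v x = w x := fun x hx => if_pos hx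
  -- a segment leaving the ball crosses the sphere, where `w` vanishes
  have hmix : ∀ x y, x ∈ Metric.closedBall (0 : E) 1 → y ∉ Metric.closedBall (0 : E) 1 →
      dist (v x) (v y) ≤ L * dist x y := by
    intro x y hx hy
    have hx' : ‖x‖ ≤ 1 := by simpa using hx
    have hy' : 1 ≤ ‖y‖ := by simpa using (not_le.1 fun h => hy (by simpa using h)).le
    have hcont : ContinuousOn (fun a : ℝ => ‖AffineMap.lineMap x y a‖) (Icc 0 1) := by
      exact (AffineMap.lineMap_continuous.norm).continuousOn
    obtain ⟨a, ha, hca⟩ := intermediate_value_Icc zero_le_one hcont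
      (show (1 : ℝ) ∈ Icc _ _ by simpa using ⟨hx', hy'⟩)
    have hca' : ‖(AffineMap.lineMap x y a : E)‖ = 1 := hca
    have h1 := hL.dist_le_mul x hx (AffineMap.lineMap x y a) (by simp [hca'])
    rw [hws _ hca', dist_left_lineMap, Real.norm_of_nonneg ha.1] at h1
    rw [hvw x hx, show v y = 0 from if_neg hy]
    refine h1.trans (mul_le_mul_of_nonneg_left ?_ L.2)
    exact mul_le_of_le_one_left dist_nonneg ha.2
  have hvL : LipschitzWith L v := by
    refine LipschitzWith.of_dist_le_mul fun x y => ?_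
    by_cases hx : x ∈ Metric.closedBall (0 : E) 1 <;> by_cases hy : y ∈ Metric.closedBall (0 : E) 1
    · rw [hvw x hx, hvw y hy]; exact hL.dist_le_mul x hx y hy
    · exact hmix x y hx hy
    · rw [dist_comm, dist_comm x]; exact hmix y x hy hx
    · simp only [v, if_neg hx, if_neg hy, dist_self]; positivity
  refine no_retraction v L hvL (fun x hx => ?_) (fun x hx => ?_) (fun x hx => ?_)
  · by_cases h : x ∈ Metric.closedBall (0 : E) 1
    · rw [hvw x h]
      refine hws x (le_antisymm (by simpa using h) (by simpa using hx))
    · exact if_neg h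
  · have h := (hwc x (Metric.ball_subset_closedBall hx)).differentiableAt one_ne_zero
    refine h.congr_of_eventuallyEq ?_
    filter_upwards [Metric.isOpen_ball.mem_nhds hx] with y hy
    exact hvw y (Metric.ball_subset_closedBall hy)
  · rw [hvw x (Metric.ball_subset_closedBall hx)]
    exact hwn x (Metric.ball_subset_closedBall hx)

lemma exists_fixed_of_approx {X : Type*} [MetricSpace X] {S : Set X} (hS : IsCompact S)
    {F : X → X} (hF : ContinuousOn F S) (h : ∀ ε > 0, ∃ x ∈ S, dist (F x) x ≤ ε) :
    ∃ x ∈ S, F x = x := by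
  obtain ⟨x0, hx0, -⟩ := h 1 one_pos
  obtain ⟨x, hx, hmin⟩ := hS.exists_isMinOn ⟨x0, hx0⟩
    (continuous_dist.comp_continuousOn (hF.prodMk continuousOn_id))
  refine ⟨x, hx, ?_⟩
  by_contra hne
  have hpos : 0 < dist (F x) x := dist_pos.2 hne
  obtain ⟨y, hy, hy'⟩ := h (dist (F x) x / 2) (by positivity)
  have : dist (F x) x ≤ dist (F y) y := hmin hy
  linarith

lemma brouwer (g : E → E) (hg : Continuous g) (hb : ∀ x, ‖g x‖ ≤ 1) : ∃ x, g x = x := by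
  have := exists_fixed_of_approx (isCompact_closedBall (0 : E) 1) (F := g) hg.continuousOn ?_
  · obtain ⟨x, -, hx⟩ := this
    exact ⟨x, hx⟩
  intro ε hε
  obtain ⟨g', hg', happ, -⟩ := hg.exists_contDiff_approx 1 (ε := fun _ => ε / 2) continuous_const
    (fun _ => by positivity)
  -- rescale the smooth approximation so that its values stay in the unit ball
  have hc : 0 < 1 + ε / 2 := by positivity
  have hn : ∀ x, ‖g' x‖ ≤ 1 + ε / 2 := fun x => by
    have h1 := norm_le_norm_add_norm_sub' (g' x) (g x)
    have h2 := happ x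
    rw [dist_eq_norm] at h2
    have h3 := hb x
    linarith
  have hn' : ∀ x, ‖(1 + ε / 2)⁻¹ • g' x‖ ≤ 1 := fun x => by
    rw [norm_smul, norm_inv, Real.norm_of_nonneg hc.le, inv_mul_le_iff₀ hc, mul_one]
    exact hn x
  obtain ⟨x, hx⟩ := brouwer_contDiff (fun x => (1 + ε / 2)⁻¹ • g' x) (contDiff_const.smul hg') hn'
  have hx1 : ‖x‖ ≤ 1 := by rw [← hx]; exact hn' x
  refine ⟨x, by simpa using hx1, ?_⟩
  have h1 : g' x = (1 + ε / 2) • x := by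
    conv_rhs => rw [← hx]
    rw [smul_inv_smul₀ hc.ne']
  have h2 : dist (g' x) x ≤ ε / 2 := by
    rw [h1, dist_eq_norm, add_smul, one_smul, add_sub_cancel_left, norm_smul,
      Real.norm_of_nonneg (by positivity)]
    nlinarith [norm_nonneg x]
  have h3 := dist_triangle_left (g x) x (g' x)
  linarith [happ x]

lemma brouwer_stdSimplex {ι : Type*} [Fintype ι] [Nonempty ι]
    (g : stdSimplex ℝ ι → stdSimplex ℝ ι) (hg : Continuous g) : ∃ w, g w = w := by
  classical
  obtain ⟨i₀⟩ := ‹Nonempty ι›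
  -- an explicit retraction onto the simplex: truncate, scale down, put the missing mass at `i₀`
  let tot : (ι → ℝ) → ℝ := fun x => ∑ i, max (x i) 0
  let m : (ι → ℝ) → ℝ := fun x => max 1 (tot x)
  let ρ : (ι → ℝ) → ι → ℝ := fun x i =>
    max (x i) 0 / m x + if i = i₀ then 1 - tot x / m x else 0
  have hm : ∀ x, 0 < m x := fun x => lt_max_of_lt_left one_pos
  have hρ : ∀ x, ρ x ∈ stdSimplex ℝ ι := by
    intro x
    have h1 : tot x / m x ≤ 1 := (div_le_one (hm x)).2 (le_max_right _ _)
    refine ⟨fun i => ?_, ?_⟩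
    · have h2 : 0 ≤ max (x i) 0 / m x := div_nonneg (le_max_right _ _) (hm x).le
      simp only [ρ]
      split_ifs <;> linarith
    · simp only [ρ, Finset.sum_add_distrib, ← Finset.sum_div]
      simp [tot]
  have hρid : ∀ x ∈ stdSimplex ℝ ι, ρ x = x := by
    intro x hx
    have h1 : ∀ i, max (x i) 0 = x i := fun i => max_eq_left (hx.1 i)
    have h2 : tot x = 1 := by simp only [tot, h1, hx.2]
    ext i
    simp [ρ, m, h1, h2]
  have hmc : Continuous m := by fun_prop
  have hρc : Continuous ρ := by
    refine continuous_pi fun i => ?_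
    have h1 : Continuous fun x => tot x / m x :=
      (by fun_prop : Continuous tot).div hmc fun x => (hm x).ne'
    have h2 : Continuous fun x : ι → ℝ => max (x i) 0 / m x :=
      (by fun_prop : Continuous fun x : ι → ℝ => max (x i) 0).div hmc fun x => (hm x).ne'
    refine h2.add ?_
    split_ifs
    · exact continuous_const.sub h1
    · exact continuous_const
  let G : EuclideanSpace ℝ ι → EuclideanSpace ℝ ι :=
    fun x => WithLp.toLp 2 (g ⟨ρ x.ofLp, hρ _⟩ : ι → ℝ)
  have hG : Continuous G := by
    refine (PiLp.continuous_toLp 2 _).comp (continuous_subtype_val.comp (hg.comp ?_))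
    exact (hρc.comp (PiLp.continuous_ofLp 2 _)).subtype_mk _
  obtain ⟨x, hx⟩ := brouwer G hG (fun x => by
    rw [EuclideanSpace.norm_eq]
    refine Real.sqrt_le_iff.2 ⟨zero_le_one, ?_⟩
    rw [one_pow]
    have hw := (g ⟨ρ x.ofLp, hρ _⟩).2
    calc ∑ i, ‖G x i‖ ^ 2 ≤ ∑ i, (g ⟨ρ x.ofLp, hρ _⟩ : ι → ℝ) i := by
          refine Finset.sum_le_sum fun i _ => ?_
          have h0 : 0 ≤ (g ⟨ρ x.ofLp, hρ _⟩ : ι → ℝ) i := hw.1 i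
          have h1 : (g ⟨ρ x.ofLp, hρ _⟩ : ι → ℝ) i ≤ 1 :=
            hw.2 ▸ Finset.single_le_sum (fun j _ => hw.1 j) (Finset.mem_univ i)
          simp only [G, Real.norm_eq_abs, sq_abs]
          nlinarith
      _ = 1 := hw.2)
  refine ⟨⟨ρ x.ofLp, hρ _⟩, Subtype.ext ?_⟩
  have h1 : (g ⟨ρ x.ofLp, hρ _⟩).1 = x.ofLp := congrArg WithLp.ofLp hx
  rw [h1]
  exact (hρid _ (h1 ▸ (g ⟨ρ x.ofLp, hρ _⟩).2)).symm

/-- Schauder's fixed point theorem for a compact convex set.  With `t` a finite `ε`-net of `S`, the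
map `x ↦ ∑ w_y(x) y` with weights `w_y(x)` proportional to `(ε - dist x y)⁺` moves points by at most
`ε` and factors through a simplex, so Brouwer's theorem yields approximate fixed points. -/
theorem schauder {V : Type*} [NormedAddCommGroup V] [NormedSpace ℝ V] {S : Set V}
    (hS : IsCompact S) (hconv : Convex ℝ S) (hne : S.Nonempty) (F : S → S) (hF : Continuous F) :
    ∃ x, F x = x := by
  have : CompactSpace S := isCompact_iff_compactSpace.1 hS
  suffices h : ∀ ε > 0, ∃ x ∈ (univ : Set S), dist (F x) x ≤ ε by
    obtain ⟨x, -, hx⟩ := exists_fixed_of_approx isCompact_univ hF.continuousOn h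
    exact ⟨x, hx⟩
  intro ε hε
  obtain ⟨t, htS, htfin, hcov⟩ := hS.finite_cover_balls hε
  have : Fintype t := htfin.fintype
  have hcov' : ∀ x ∈ S, ∃ y : t, dist x y < ε := fun x hx => by
    simpa using hcov hx
  have : Nonempty t := by
    obtain ⟨x, hx⟩ := hne
    exact ⟨(hcov' x hx).choose⟩
  let a : S → t → ℝ := fun x y => max (ε - dist (x : V) y) 0
  let A : S → ℝ := fun x => ∑ y, a x y
  have ha0 : ∀ x y, 0 ≤ a x y := fun x y => le_max_right _ _
  have hA : ∀ x, 0 < A x := by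
    intro x
    obtain ⟨y, hy⟩ := hcov' x x.2
    exact Finset.sum_pos' (fun y _ => ha0 x y)
      ⟨y, Finset.mem_univ _, lt_max_of_lt_left (sub_pos.2 hy)⟩
  have hac : ∀ y, Continuous fun x => a x y := fun y => by fun_prop
  have hAc : Continuous A := continuous_finsetSum _ fun y _ => hac y
  let π : S → stdSimplex ℝ t := fun x => ⟨fun y => a x y / A x,
    fun y => div_nonneg (ha0 x y) (hA x).le, by
      rw [← Finset.sum_div]; exact div_self (hA x).ne'⟩
  have hπ : Continuous π :=
    (continuous_pi fun y => (hac y).div hAc fun x => (hA x).ne').subtype_mk _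
  let ι : stdSimplex ℝ t → S := fun w => ⟨∑ y, (w : t → ℝ) y • (y : V),
    hconv.sum_mem (fun y _ => w.2.1 y) w.2.2 fun y _ => htS y.2⟩
  have hι : Continuous ι := by
    refine Continuous.subtype_mk (continuous_finsetSum _ fun y _ => ?_) _
    exact ((continuous_apply y).comp continuous_subtype_val).smul continuous_const
  obtain ⟨w, hw⟩ := brouwer_stdSimplex (π ∘ F ∘ ι) (hπ.comp (hF.comp hι))
  refine ⟨ι w, mem_univ _, ?_⟩
  set q := F (ι w) with hq
  have h1 : (ι w : V) = ∑ y, (a q y / A q) • (y : V) := by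
    have : (w : t → ℝ) = fun y => a q y / A q := congrArg Subtype.val hw.symm
    change ∑ y, (w : t → ℝ) y • (y : V) = _
    rw [this]
  rw [Subtype.dist_eq, dist_comm, h1]
  -- the weights vanish off the ball around `q`, which is convex
  have hsum : ∑ y, a q y / A q = 1 := by rw [← Finset.sum_div]; exact div_self (hA q).ne'
  have h2 : ∑ y, (a q y / A q) • (y : V) - (q : V) = ∑ y, (a q y / A q) • ((y : V) - q) := by
    simp_rw [smul_sub]
    rw [Finset.sum_sub_distrib, ← Finset.sum_smul, hsum, one_smul]
  rw [dist_eq_norm, h2]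
  calc ‖∑ y, (a q y / A q) • ((y : V) - q)‖ ≤ ∑ y, a q y / A q * ε := by
        refine norm_sum_le_of_le _ fun y _ => ?_
        have h3 : 0 ≤ a q y / A q := div_nonneg (ha0 q y) (hA q).le
        rw [norm_smul, Real.norm_of_nonneg h3]
        by_cases hy : dist (q : V) y < ε
        · rw [dist_comm, dist_eq_norm] at hy
          exact mul_le_mul_of_nonneg_left hy.le h3
        · have : a q y = 0 := max_eq_right (by linarith)
          simp [this]
    _ = ε := by rw [← Finset.sum_mul, hsum, one_mul]

end Brouwer

/-! ### Concatenation of humps -/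

/-- A positive hump `U` on `[0, z]` and a negative hump `-V` of length `w`, each driven by the delay
equation with the other one as history, concatenate periodically to an SOP solution. -/
lemma exists_isSOP_of_humps (f U V : ℝ → ℝ) (z w : ℝ) (hz : 1 < z) (hw : 1 < w)
    (hU0 : U 0 = 0) (hUz : U z = 0) (hV0 : V 0 = 0) (hVw : V w = 0)
    (hUpos : ∀ t, 0 < t → t < z → 0 < U t) (hVpos : ∀ t, 0 < t → t < w → 0 < V t)
    (dU1 : ∀ t, 0 ≤ t → t ≤ 1 → HasDerivAt U (f (-V (w + t - 1))) t)
    (dU2 : ∀ t, 1 ≤ t → t ≤ z → HasDerivAt U (f (U (t - 1))) t)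
    (dV1 : ∀ t, 0 ≤ t → t ≤ 1 → HasDerivAt V (-f (U (z + t - 1))) t)
    (dV2 : ∀ t, 1 ≤ t → t ≤ w → HasDerivAt V (-f (-V (t - 1))) t) :
    ∃ p, IsSOP f p ∧ ∀ t, 0 ≤ t → t ≤ z → p t = U t := by
  have hT : 0 < z + w := by linarith
  let q : ℝ → ℝ := fun r => if r ≤ z then U r else -V (r - z)
  let p : ℝ → ℝ := fun t => q (toIcoMod hT 0 t)
  have hper : ∀ (n : ℤ) t, p (t + n * (z + w)) = p t := by
    intro n t
    simp only [p]
    rw [← zsmul_eq_mul, toIcoMod_add_zsmul]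
  have hp : ∀ t, 0 ≤ t → t < z + w → p t = q t := by
    intro t h0 h1
    simp only [p]
    rw [(toIcoMod_eq_self hT).2 ⟨h0, by linarith⟩]
  have pU : ∀ t, 0 ≤ t → t ≤ z → p t = U t := by
    intro t h0 h1
    rw [hp t h0 (by linarith)]
    exact if_pos h1
  have hper1 : ∀ t, p (t + (z + w)) = p t := fun t => by simpa using hper 1 t
  have pV : ∀ t, z ≤ t → t ≤ z + w → p t = -V (t - z) := by
    intro t h0 h1
    rcases h1.lt_or_eq with h1 | rfl
    · rw [hp t (by linarith) h1]
      rcases h0.lt_or_eq with h0 | rfl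
      · exact if_neg (by linarith)
      · simp [q, hUz, hV0]
    · have := hper1 0
      rw [zero_add] at this
      rw [this, pU 0 le_rfl (by linarith), hU0, add_sub_cancel_left, hVw, neg_zero]
  have pV' : ∀ t, -w ≤ t → t ≤ 0 → p t = -V (w + t) := by
    intro t h0 h1
    rw [← hper1, pV _ (by linarith) (by linarith)]
    congr 2; ring
  have D1 : ∀ r, 0 ≤ r → r ≤ z → HasDerivAt U (f (p (r - 1))) r := by
    intro r h0 h1
    rcases le_total r 1 with h | h
    · have := dU1 r h0 h
      rwa [pV' (r - 1) (by linarith) (by linarith), ← add_sub_assoc]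
    · rw [pU (r - 1) (by linarith) (by linarith)]
      exact dU2 r h h1
  have D2 : ∀ r, z ≤ r → r ≤ z + w → HasDerivAt (fun t => -V (t - z)) (f (p (r - 1))) r := by
    intro r h0 h1
    rcases le_total (r - z) 1 with h | h
    · have h2 := ((dV1 (r - z) (by linarith) h).comp_sub_const r z).neg
      rw [neg_neg, add_sub_cancel] at h2
      rw [pU (r - 1) (by linarith) (by linarith)]
      exact h2
    · have h2 := ((dV2 (r - z) h (by linarith)).comp_sub_const r z).neg
      rw [neg_neg] at h2
      rw [pV (r - 1) (by linarith) (by linarith), sub_right_comm]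
      exact h2
  -- representation of an arbitrary time modulo the period
  have hshift : ∀ (n : ℤ) t, p t = p (t - n * (z + w)) := fun n t => by
    rw [← hper n (t - n * (z + w)), sub_add_cancel]
  have hfin : ∀ t, HasDerivAt p (f (p (t - 1))) t := by
    intro t
    have hright : HasDerivWithinAt p (f (p (t - 1))) (Ici t) t := by
      obtain ⟨n, r, hr, rfl⟩ : ∃ (n : ℤ) (r : ℝ), r ∈ Ico 0 (z + w) ∧ t = r + n * (z + w) := by
        refine ⟨toIcoDiv hT 0 t, toIcoMod hT 0 t, by simpa using toIcoMod_mem_Ico hT 0 t, ?_⟩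
        rw [← zsmul_eq_mul, toIcoMod_add_toIcoDiv_zsmul]
      set c := n * (z + w) with hc
      have hval : p (r + c - 1) = p (r - 1) := by rw [hshift n]; congr 1; ring
      rw [hval]
      rcases lt_or_ge r z with h | h
      · have h1 := (show HasDerivAt U (f (p (r - 1))) (r + c - c) by
          rw [add_sub_cancel_right]; exact D1 r hr.1 h.le).comp_sub_const (r + c) c
        refine h1.hasDerivWithinAt.congr_of_eventuallyEq ?_ ?_
        · filter_upwards [Ico_mem_nhdsGE (show r + c < z + c by linarith)] with s hs
          rw [hshift n s]
          exact pU _ (by linarith [hs.1, hr.1]) (by linarith [hs.2])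
        · rw [hshift n]
          exact pU _ (by linarith [hr.1]) (by linarith)
      · have h1 := (show HasDerivAt (fun t => -V (t - z)) (f (p (r - 1))) (r + c - c) by
          rw [add_sub_cancel_right]; exact D2 r h hr.2.le).comp_sub_const (r + c) c
        refine h1.hasDerivWithinAt.congr_of_eventuallyEq ?_ ?_
        · filter_upwards [Ico_mem_nhdsGE (show r + c < z + w + c by linarith [hr.2])] with s hs
          rw [hshift n s]
          exact pV _ (by linarith [hs.1]) (by linarith [hs.2])
        · rw [hshift n]
          exact pV _ (by linarith) (by linarith [hr.2])
    have hleft : HasDerivWithinAt p (f (p (t - 1))) (Iic t) t := by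
      obtain ⟨n, r, hr, rfl⟩ : ∃ (n : ℤ) (r : ℝ), r ∈ Ioc 0 (z + w) ∧ t = r + n * (z + w) := by
        refine ⟨toIocDiv hT 0 t, toIocMod hT 0 t, by simpa using toIocMod_mem_Ioc hT 0 t, ?_⟩
        rw [← zsmul_eq_mul, toIocMod_add_toIocDiv_zsmul]
      set c := n * (z + w) with hc
      have hval : p (r + c - 1) = p (r - 1) := by rw [hshift n]; congr 1; ring
      rw [hval]
      rcases le_or_gt r z with h | h
      · have h1 := (show HasDerivAt U (f (p (r - 1))) (r + c - c) by
          rw [add_sub_cancel_right]; exact D1 r hr.1.le h).comp_sub_const (r + c) c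
        refine h1.hasDerivWithinAt.congr_of_eventuallyEq ?_ ?_
        · filter_upwards [Ioc_mem_nhdsLE (show c < r + c by linarith [hr.1])] with s hs
          rw [hshift n s]
          exact pU _ (by linarith [hs.1]) (by linarith [hs.2])
        · rw [hshift n]
          exact pU _ (by linarith [hr.1]) (by linarith)
      · have h1 := (show HasDerivAt (fun t => -V (t - z)) (f (p (r - 1))) (r + c - c) by
          rw [add_sub_cancel_right]; exact D2 r h.le hr.2).comp_sub_const (r + c) c
        refine h1.hasDerivWithinAt.congr_of_eventuallyEq ?_ ?_
        · filter_upwards [Ioc_mem_nhdsLE (show z + c < r + c by linarith)] with s hs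
          rw [hshift n s]
          exact pV _ (by linarith [hs.1]) (by linarith [hs.2, hr.2])
        · rw [hshift n]
          exact pV _ (by linarith) (by linarith [hr.2])
    have := hleft.union hright
    rwa [Iic_union_Ici, hasDerivWithinAt_univ] at this
  have hzeros : ∀ t, p t = 0 → ∃ n : ℤ, t = n * (z + w) ∨ t = z + n * (z + w) := by
    intro t ht
    have hmem : toIcoMod hT 0 t ∈ Ico 0 (z + w) := by simpa using toIcoMod_mem_Ico hT 0 t
    have hrep : toIcoMod hT 0 t + toIcoDiv hT 0 t * (z + w) = t := by
      rw [← zsmul_eq_mul, toIcoMod_add_toIcoDiv_zsmul]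
    set r := toIcoMod hT 0 t
    refine ⟨toIcoDiv hT 0 t, ?_⟩
    have hq : q r = 0 := ht
    by_cases h : r ≤ z
    · have hUr : U r = 0 := by simpa [q, h] using hq
      rcases hmem.1.lt_or_eq with h0 | h0
      · rcases h.lt_or_eq with h1 | h1
        · exact absurd hUr (hUpos r h0 h1).ne'
        · right; linarith
      · left; rw [← h0, zero_add] at hrep; exact hrep.symm
    · have hVr : V (r - z) = 0 := by simpa [q, h] using hq
      exact absurd hVr (hVpos _ (by linarith) (by linarith [hmem.2])).ne'
  refine ⟨p, ⟨hfin, ⟨z + w, hT, hper1⟩, ⟨z / 2, 0, ?_⟩, ?_⟩, pU⟩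
  · rw [pU _ (by linarith) (by linarith), pU 0 le_rfl (by linarith), hU0]
    exact (hUpos _ (by linarith) (by linarith)).ne'
  · intro t t' ht ht' hne
    have hk : ∀ k : ℤ, k ≤ -1 ∨ k = 0 ∨ 1 ≤ k := fun k => by omega
    obtain ⟨n, hn⟩ := hzeros t ht
    obtain ⟨m, hm⟩ := hzeros t' ht'
    have hdiff : ∃ k : ℤ, t - t' = k * (z + w) ∨ t - t' = z + k * (z + w) ∨
        t - t' = -(z + k * (z + w)) := by
      rcases hn with rfl | rfl <;> rcases hm with rfl | rfl
      · exact ⟨n - m, Or.inl (by push_cast; ring)⟩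
      · exact ⟨m - n, Or.inr (Or.inr (by push_cast; ring))⟩
      · exact ⟨n - m, Or.inr (Or.inl (by push_cast; ring))⟩
      · exact ⟨n - m, Or.inl (by push_cast; ring)⟩
    obtain ⟨k, hk'⟩ := hdiff
    have hkc : (k : ℝ) * (z + w) ≤ -(z + w) ∨ (k : ℝ) * (z + w) = 0 ∨ z + w ≤ k * (z + w) := by
      rcases hk k with h | h | h
      · left
        have : (k : ℝ) ≤ -1 := by exact_mod_cast h
        nlinarith
      · right; left; simp [h]
      · right; right
        have : (1 : ℝ) ≤ k := by exact_mod_cast h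
        nlinarith
    have hne' : t - t' ≠ 0 := sub_ne_zero.2 hne
    rw [lt_abs]
    rcases hk' with h | h | h <;> rcases hkc with h2 | h2 | h2
    · right; linarith
    · exact absurd (h.trans h2) hne'
    · left; linarith
    · right; linarith
    · left; linarith
    · left; linarith
    · left; linarith
    · right; linarith
    · right; linarith

/-! ### Humps and prescribed slopes -/

/-- Profiles of one hump of a solution, measured from a zero: `μ`-Lipschitz on `[0, L]`, rising on
`[0, 1]` with `U t ≥ σ t` up to time `1 - b`, not increasing on `[1, 1 + b]`, still at least `σ b`
at time `1 + b`, and falling at speed at least `σ` from then on.  These conditions are closed and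
convex, and for large `L` they force exactly one zero in `(0, L]`. -/
structure IsHump (μ σ b L : ℝ) (U : ℝ → ℝ) : Prop where
  zero : U 0 = 0
  lip : ∀ s t, 0 ≤ s → s ≤ t → t ≤ L → |U t - U s| ≤ μ * (t - s)
  mono : ∀ s t, 0 ≤ s → s ≤ t → t ≤ 1 → U s ≤ U t
  rise : ∀ t, 0 ≤ t → t ≤ 1 - b → σ * t ≤ U t
  anti : ∀ s t, 1 ≤ s → s ≤ t → t ≤ 1 + b → U t ≤ U s
  mid : σ * b ≤ U (1 + b)
  fall : ∀ s t, 1 + b ≤ s → s ≤ t → t ≤ L → U t ≤ U s - σ * (t - s)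

namespace IsHump

variable {μ σ b L : ℝ} {U : ℝ → ℝ}

lemma pos (hU : IsHump μ σ b L U) (hσ : 0 < σ) (hb : 0 < b) (hb2 : 2 * b ≤ 1) {z : ℝ}
    (hzL : z ≤ L) (hUz : U z = 0) {t : ℝ} (ht : 0 < t) (htz : t < z) : 0 < U t := by
  have h0 : 0 < σ * b := by positivity
  rcases le_total t (1 - b) with h1 | h1
  · have := hU.rise t ht.le h1
    have : 0 < σ * t := by positivity
    linarith
  rcases le_total t 1 with h2 | h2
  · have h3 := hU.rise (1 - b) (by linarith) le_rfl
    have h4 := hU.mono (1 - b) t (by linarith) h1 h2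
    have : 0 < σ * (1 - b) := mul_pos hσ (by linarith)
    linarith
  rcases le_total t (1 + b) with h3 | h3
  · linarith [hU.anti t (1 + b) h2 h3 le_rfl, hU.mid]
  · have h4 := hU.fall t z h3 htz.le hzL
    have : 0 < σ * (z - t) := mul_pos hσ (by linarith)
    linarith

lemma nonneg (hU : IsHump μ σ b L U) (hσ : 0 < σ) (hb : 0 < b) (hb2 : 2 * b ≤ 1) {z : ℝ}
    (hzL : z ≤ L) (hUz : U z = 0) {t : ℝ} (ht : 0 ≤ t) (htz : t ≤ z) : 0 ≤ U t := by
  rcases ht.lt_or_eq with h | rfl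
  · rcases htz.lt_or_eq with h' | rfl
    · exact (hU.pos hσ hb hb2 hzL hUz h h').le
    · exact hUz.ge
  · exact hU.zero.ge

/-- A hump is at least `σ b` except within distance `b` of its two zeros. -/
lemma large (hU : IsHump μ σ b L U) (hσ : 0 < σ) (hb : 0 < b) (hb2 : 2 * b ≤ 1) {z : ℝ}
    (hzL : z ≤ L) (hUz : U z = 0) {t : ℝ} (ht : b ≤ t) (htz : t ≤ z - b) :
    σ * b ≤ U t := by
  rcases le_total t (1 - b) with h1 | h1
  · have := hU.rise t (by linarith) h1
    nlinarith
  rcases le_total t 1 with h2 | h2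
  · have h3 := hU.rise (1 - b) (by linarith) le_rfl
    have h4 := hU.mono (1 - b) t (by linarith) h1 h2
    nlinarith
  rcases le_total t (1 + b) with h3 | h3
  · linarith [hU.anti t (1 + b) h2 h3 le_rfl, hU.mid]
  · have h4 := hU.fall t z h3 (by linarith) hzL
    nlinarith

lemma exists_zero (hU : IsHump μ σ b L U) (hσ : 0 < σ) (hb : 0 < b) (hb2 : 2 * b ≤ 1)
    (hc : Continuous U) (hL : 1 + b + μ * (1 + b) / σ ≤ L) (hbL : 1 + b ≤ L) :
    ∃ z, 1 + b ≤ z ∧ z ≤ L ∧ U z = 0 := by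
  have h1 : 0 ≤ U (1 + b) := (mul_pos hσ hb).le.trans hU.mid
  have h2 : U L ≤ 0 := by
    have h3 := hU.lip 0 (1 + b) le_rfl (by linarith) hbL
    rw [hU.zero, sub_zero, sub_zero, abs_of_nonneg h1] at h3
    have h4 := hU.fall (1 + b) L le_rfl hbL le_rfl
    have h5 : μ * (1 + b) ≤ σ * (L - (1 + b)) := by
      have h6 : μ * (1 + b) / σ ≤ L - (1 + b) := by linarith
      rw [div_le_iff₀ hσ] at h6
      linarith
    linarith
  obtain ⟨z, hz, hz'⟩ := intermediate_value_Icc' hbL hc.continuousOn ⟨h2, h1⟩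
  exact ⟨z, hz.1, hz.2, hz'⟩

/-- The zero of a hump depends on the hump in a Lipschitz way, because humps cross `0` with speed
at least `σ`. -/
lemma zero_sub_le {U' : ℝ → ℝ} (hU' : IsHump μ σ b L U') {z z' : ℝ}
    (hz : 1 + b ≤ z) (hUz : U z = 0) (hz'L : z' ≤ L) (hUz' : U' z' = 0) {ε : ℝ}
    (h : |U z - U' z| ≤ ε) : σ * (z' - z) ≤ ε ∨ z' ≤ z := by
  rcases le_total z z' with h1 | h1
  · left
    have h2 := hU'.fall z z' hz h1 hz'L
    have h3 := (abs_le.1 h).1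
    linarith
  · exact Or.inr h1

/-- A primitive of a slope function with the appropriate signs and sizes is a hump. -/
lemma of_slope {h : ℝ → ℝ} (hh : Continuous h) (hb : 0 < b) (hb2 : 2 * b ≤ 1)
    (hbμ : 2 * σ * b + μ * b ≤ σ) (hbL : 1 + b ≤ L)
    (h1 : ∀ s, 0 ≤ s → s ≤ L → |h s| ≤ μ) (h2 : ∀ s, 0 ≤ s → s ≤ 1 → 0 ≤ h s)
    (h3 : ∀ s, 0 ≤ s → s ≤ 1 - b → σ ≤ h s) (h4 : ∀ s, 1 ≤ s → s ≤ L → h s ≤ 0)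
    (h5 : ∀ s, 1 + b ≤ s → s ≤ L → h s ≤ -σ) :
    IsHump μ σ b L (fun t => ∫ s in (0 : ℝ)..t, h s) := by
  have hi : ∀ x y : ℝ, IntervalIntegrable h MeasureTheory.volume x y :=
    fun x y => hh.intervalIntegrable x y
  have hadd : ∀ s t : ℝ, (∫ r in (0 : ℝ)..t, h r) - (∫ r in (0 : ℝ)..s, h r) = ∫ r in s..t, h r :=
    fun s t => intervalIntegral.integral_interval_sub_left (hi _ _) (hi _ _)
  have hub : ∀ (s t c : ℝ), s ≤ t → (∀ r ∈ Icc s t, h r ≤ c) → ∫ r in s..t, h r ≤ c * (t - s) := by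
    intro s t c hst hr
    have := intervalIntegral.integral_mono_on hst (hi s t) (by simp) hr (g := fun _ => c)
    simpa [mul_comm] using this
  have hlb : ∀ (s t c : ℝ), s ≤ t → (∀ r ∈ Icc s t, c ≤ h r) → c * (t - s) ≤ ∫ r in s..t, h r := by
    intro s t c hst hr
    have := intervalIntegral.integral_mono_on hst (by simp) (hi s t) hr (f := fun _ => c)
    simpa [mul_comm] using this
  have hrise : ∀ t, 0 ≤ t → t ≤ 1 - b → σ * t ≤ ∫ s in (0 : ℝ)..t, h s := fun t h0 ht => by
    simpa using hlb 0 t σ h0 fun r hr => h3 r hr.1 (hr.2.trans ht)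
  have hmono : ∀ s t, 0 ≤ s → s ≤ t → t ≤ 1 →
      (∫ r in (0 : ℝ)..s, h r) ≤ ∫ r in (0 : ℝ)..t, h r := fun s t hs hst ht => by
    have := hlb s t 0 hst fun r hr => h2 r (hs.trans hr.1) (hr.2.trans ht)
    rw [← hadd] at this
    linarith
  refine ⟨by simp, fun s t hs hst ht => ?_, hmono, hrise, fun s t hs hst ht => ?_, ?_,
    fun s t hs hst ht => ?_⟩
  · rw [hadd, abs_le]
    constructor
    · have := hlb s t (-μ) hst fun r hr => (abs_le.1 (h1 r (hs.trans hr.1) (hr.2.trans ht))).1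
      linarith
    · exact hub s t μ hst fun r hr => (abs_le.1 (h1 r (hs.trans hr.1) (hr.2.trans ht))).2
  · have := hub s t 0 hst fun r hr => h4 r (hs.trans hr.1) (by linarith [hr.2])
    rw [← hadd] at this
    linarith
  · have e1 := hrise (1 - b) (by linarith) le_rfl
    have e2 := hmono (1 - b) 1 (by linarith) (by linarith) le_rfl
    have e3 := hlb 1 (1 + b) (-μ) (by linarith)
      fun r hr => (abs_le.1 (h1 r (by linarith [hr.1]) (by linarith [hr.2]))).1
    rw [← hadd] at e3
    linarith
  · have := hub s t (-σ) hst fun r hr => h5 r (hs.trans hr.1) (hr.2.trans ht)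
    rw [← hadd] at this
    linarith

lemma congr (hU : IsHump μ σ b L U) {U' : ℝ → ℝ} (hbL : 1 + b ≤ L) (hb : 0 < b)
    (h : ∀ t, 0 ≤ t → t ≤ L → U' t = U t) : IsHump μ σ b L U' where
  zero := by rw [h 0 le_rfl (by linarith), hU.zero]
  lip s t h1 h2 h3 := by
    rw [h s h1 (h2.trans h3), h t (h1.trans h2) h3]
    exact hU.lip s t h1 h2 h3
  mono s t h1 h2 h3 := by
    rw [h s h1 (by linarith), h t (h1.trans h2) (by linarith)]
    exact hU.mono s t h1 h2 h3
  rise t h1 h2 := by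
    rw [h t h1 (by linarith)]
    exact hU.rise t h1 h2
  anti s t h1 h2 h3 := by
    rw [h s (by linarith) (by linarith), h t (by linarith) (by linarith)]
    exact hU.anti s t h1 h2 h3
  mid := by
    rw [h _ (by linarith) hbL]
    exact hU.mid
  fall s t h1 h2 h3 := by
    rw [h s (by linarith) (by linarith), h t (by linarith) h3]
    exact hU.fall s t h1 h2 h3

end IsHump

/-- The slope prescribed for the hump of the sign opposite to `u`, following the zero `z` of `u`.
The first term is the delay equation with history `u`, acting on `[0, 1]`; the second one is the
delay equation with the hump's own past `-v` as history, acting after time `1`.  In the second term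
`v t` is replaced by `max (v t) (min (σ b) (σ t))`, which changes nothing while `v t` is at least
`min (σ b) (σ t)` and makes the slope at most `-σ` from time `1 + b` on. -/
noncomputable def humpSlope (f : ℝ → ℝ) (σ b z : ℝ) (u v : ℝ → ℝ) (s : ℝ) : ℝ :=
  -f (u (z + min (s - 1) 0)) -
    f (-max (v (max (s - 1) 0)) (min (σ * b) (σ * max (s - 1) 0)))

/-- The properties of the nonlinearity used by the fixed point argument: negative feedback, the
bound `μ`, and the lower bound `σ` for `|f|` at distance at least `σ b` from `0`. -/
structure IsFeedback (f : ℝ → ℝ) (μ σ b : ℝ) : Prop where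
  cont : Continuous f
  neg : ∀ x, x ≠ 0 → x * f x < 0
  le : ∀ x, |f x| ≤ μ
  ge : ∀ x, σ * b ≤ |x| → σ ≤ |f x|

namespace IsFeedback

variable {f : ℝ → ℝ} {μ σ b : ℝ}

lemma reflect (hf : IsFeedback f μ σ b) : IsFeedback (fun x => -f (-x)) μ σ b := by
  refine ⟨(hf.cont.comp continuous_neg).neg, fun x hx => ?_, fun x => ?_, fun x hx => ?_⟩
  · have := hf.neg (-x) (neg_ne_zero.2 hx)
    linarith
  · rw [abs_neg]; exact hf.le _
  · rw [abs_neg]; exact hf.ge _ (by rwa [abs_neg])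

lemma map_zero (hf : IsFeedback f μ σ b) : f 0 = 0 := by
  -- `f > 0` on the left and `f < 0` on the right of `0`
  have h1 : Tendsto f (nhdsWithin 0 (Ioi 0)) (nhds (f 0)) := hf.cont.continuousAt.tendsto.mono_left
    nhdsWithin_le_nhds
  have h2 : Tendsto f (nhdsWithin 0 (Iio 0)) (nhds (f 0)) := hf.cont.continuousAt.tendsto.mono_left
    nhdsWithin_le_nhds
  refine le_antisymm (le_of_tendsto h1 ?_) (ge_of_tendsto h2 ?_)
  · filter_upwards [self_mem_nhdsWithin] with x hx
    have hx : 0 < x := hx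
    by_contra! h
    nlinarith [hf.neg x hx.ne', mul_pos hx h]
  · filter_upwards [self_mem_nhdsWithin] with x hx
    have hx : x < 0 := hx
    by_contra! h
    nlinarith [hf.neg x hx.ne, mul_pos_of_neg_of_neg hx h]

lemma nonpos (hf : IsFeedback f μ σ b) {x : ℝ} (hx : 0 ≤ x) : f x ≤ 0 := by
  rcases hx.lt_or_eq with h | rfl
  · by_contra! h'
    nlinarith [hf.neg x h.ne', mul_pos h h']
  · exact hf.map_zero.le

lemma le_neg (hf : IsFeedback f μ σ b) {x : ℝ} (hx : 0 ≤ x) (hxb : σ * b ≤ x) : f x ≤ -σ := by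
  have h1 := hf.ge x (hxb.trans (le_abs_self x))
  rw [abs_of_nonpos (hf.nonpos hx)] at h1
  linarith

lemma nonneg_neg (hf : IsFeedback f μ σ b) {x : ℝ} (hx : 0 ≤ x) : 0 ≤ f (-x) := by
  linarith [hf.reflect.nonpos hx]

lemma ge_neg (hf : IsFeedback f μ σ b) {x : ℝ} (hx : 0 ≤ x) (hxb : σ * b ≤ x) : σ ≤ f (-x) := by
  linarith [hf.reflect.le_neg hx hxb]

end IsFeedback

section Step

variable {f : ℝ → ℝ} {μ σ b L z : ℝ} {u v : ℝ → ℝ}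

lemma humpSlope_of_le_one (hf : IsFeedback f μ σ b) (hσ : 0 < σ) (hb : 0 < b) (hv : v 0 = 0) {s : ℝ}
    (hs : s ≤ 1) : humpSlope f σ b z u v s = -f (u (z + s - 1)) := by
  have h0 : 0 ≤ σ * b := by positivity
  rw [humpSlope, max_eq_right (by linarith : s - 1 ≤ 0), min_eq_left (by linarith : s - 1 ≤ 0), hv,
    mul_zero, min_eq_right h0, max_self, neg_zero, hf.map_zero, sub_zero, add_sub_assoc]

lemma humpSlope_of_one_le (hf : IsFeedback f μ σ b) (hu : u z = 0) {s : ℝ} (hs : 1 ≤ s) :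
    humpSlope f σ b z u v s = -f (-max (v (s - 1)) (min (σ * b) (σ * (s - 1)))) := by
  rw [humpSlope, max_eq_left (by linarith : 0 ≤ s - 1), min_eq_right (by linarith : 0 ≤ s - 1),
    add_zero, hu, hf.map_zero, neg_zero, zero_sub]

/-- The primitive of the prescribed slope is a hump. -/
lemma isHump_step (hf : IsFeedback f μ σ b) (hσ : 0 < σ) (hb : 0 < b) (hb2 : 2 * b ≤ 1)
    (hbμ : 2 * σ * b + μ * b ≤ σ) (hbL : 1 + b ≤ L) (hu : IsHump μ σ b L u) (huc : Continuous u)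
    (hv : v 0 = 0) (hvc : Continuous v) (hz : 1 + b ≤ z) (hzL : z ≤ L) (huz : u z = 0) :
    IsHump μ σ b L (fun t => ∫ s in (0 : ℝ)..t, humpSlope f σ b z u v s) := by
  have hfc := hf.cont
  have h0 : 0 < σ * b := by positivity
  have hlow : ∀ s, 1 ≤ s → 0 ≤ max (v (s - 1)) (min (σ * b) (σ * (s - 1))) := fun s hs =>
    le_max_of_le_right (le_min h0.le (mul_nonneg hσ.le (by linarith)))
  refine IsHump.of_slope (by unfold humpSlope; fun_prop) hb hb2 hbμ hbL
    (fun s h0 hs => ?_) (fun s h0 hs => ?_) (fun s h0 hs => ?_) (fun s h1 hs => ?_)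
    (fun s h1 hs => ?_)
  · rcases le_total s 1 with h | h
    · rw [humpSlope_of_le_one hf hσ hb hv h, abs_neg]; exact hf.le _
    · rw [humpSlope_of_one_le hf huz h, abs_neg]; exact hf.le _
  · rw [humpSlope_of_le_one hf hσ hb hv hs]
    have := hf.nonpos (hu.nonneg hσ hb hb2 hzL huz (t := z + s - 1) (by linarith) (by linarith))
    linarith
  · rw [humpSlope_of_le_one hf hσ hb hv (by linarith)]
    have h1 := hu.large hσ hb hb2 hzL huz (t := z + s - 1) (by linarith) (by linarith)
    have := hf.le_neg (by linarith) h1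
    linarith
  · rw [humpSlope_of_one_le hf huz h1]
    have := hf.nonneg_neg (hlow s h1)
    linarith
  · rw [humpSlope_of_one_le hf huz (by linarith)]
    have h2 : σ * b ≤ max (v (s - 1)) (min (σ * b) (σ * (s - 1))) :=
      le_max_of_le_right (le_min le_rfl (mul_le_mul_of_nonneg_left (by linarith) hσ.le))
    have := hf.ge_neg (hlow s (by linarith)) h2
    linarith

/-- On a hump, the cut-off in `humpSlope` is inactive up to the zero `w` of `v`. -/
lemma humpSlope_of_isHump (hf : IsFeedback f μ σ b) (hσ : 0 < σ) (hb : 0 < b) (hb2 : 2 * b ≤ 1)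
    (huz : u z = 0) (hv : IsHump μ σ b L v) {w : ℝ} (hwL : w ≤ L) (hvw : v w = 0) {s : ℝ}
    (hs : 1 ≤ s) (hsw : s ≤ w) : humpSlope f σ b z u v s = -f (-v (s - 1)) := by
  rw [humpSlope_of_one_le hf huz hs, max_eq_left]
  rcases le_total (s - 1) b with h | h
  · exact (min_le_right _ _).trans (hv.rise _ (by linarith) (by linarith))
  · exact (min_le_left _ _).trans (hv.large hσ hb hb2 hwL hvw h (by linarith))

end Step

/-! ### The compact convex set of humps -/

section HumpSet

variable {μ σ b L : ℝ}

/-- The humps, as a subset of the Banach space of continuous functions on `[0, L]`; these are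
extended to `ℝ` by their values at the endpoints. -/
def humpSet (μ σ b : ℝ) {L : ℝ} (hL : 0 ≤ L) : Set C(Icc (0 : ℝ) L, ℝ) :=
  {u | IsHump μ σ b L (IccExtend hL u)}

lemma convex_humpSet (hL : 0 ≤ L) : Convex ℝ (humpSet μ σ b hL) := by
  intro u hu v hv x y hx hy hxy
  have hy' : y = 1 - x := by linarith
  have hE : ∀ t, IccExtend hL (x • u + y • v : C(Icc (0 : ℝ) L, ℝ)) t =
      x * IccExtend hL u t + y * IccExtend hL v t := fun t => by simp [IccExtend]
  have hcomb : ∀ {a a' c c' : ℝ}, a ≤ a' → c ≤ c' → x * a + y * c ≤ x * a' + y * c' :=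
    fun h h' => add_le_add (mul_le_mul_of_nonneg_left h hx) (mul_le_mul_of_nonneg_left h' hy)
  refine ⟨?_, ?_, ?_, ?_, ?_, ?_, ?_⟩ <;> simp only [hE]
  · rw [hu.zero, hv.zero, mul_zero, mul_zero, add_zero]
  · intro s t h1 h2 h3
    have e1 := abs_le.1 (hu.lip s t h1 h2 h3)
    have e2 := abs_le.1 (hv.lip s t h1 h2 h3)
    have e3 := hcomb e1.1 e2.1
    have e4 := hcomb e1.2 e2.2
    rw [← add_mul, hxy] at e3 e4
    rw [abs_le]
    constructor <;> linarith
  · exact fun s t h1 h2 h3 => hcomb (hu.mono s t h1 h2 h3) (hv.mono s t h1 h2 h3)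
  · intro t h1 h2
    have := hcomb (hu.rise t h1 h2) (hv.rise t h1 h2)
    rwa [← add_mul, hxy, one_mul] at this
  · exact fun s t h1 h2 h3 => hcomb (hu.anti s t h1 h2 h3) (hv.anti s t h1 h2 h3)
  · have := hcomb hu.mid hv.mid
    rwa [← add_mul, hxy, one_mul] at this
  · intro s t h1 h2 h3
    have := hcomb (hu.fall s t h1 h2 h3) (hv.fall s t h1 h2 h3)
    subst hy'
    linarith

lemma isClosed_humpSet (hL : 0 ≤ L) : IsClosed (humpSet μ σ b hL) := by
  refine IsSeqClosed.isClosed fun u v hu huv => ?_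
  have hE : ∀ t, Tendsto (fun n => IccExtend hL (u n) t) atTop (nhds (IccExtend hL v t)) :=
    fun t => ((continuous_eval_const (projIcc 0 L hL t)).tendsto v).comp huv
  refine ⟨?_, fun s t h1 h2 h3 => ?_, fun s t h1 h2 h3 => ?_, fun t h1 h2 => ?_,
    fun s t h1 h2 h3 => ?_, ?_, fun s t h1 h2 h3 => ?_⟩
  · exact tendsto_nhds_unique (hE 0) (tendsto_const_nhds.congr fun n => (hu n).zero.symm)
  · exact le_of_tendsto' ((hE t).sub (hE s)).abs fun n => (hu n).lip s t h1 h2 h3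
  · exact le_of_tendsto_of_tendsto' (hE s) (hE t) fun n => (hu n).mono s t h1 h2 h3
  · exact ge_of_tendsto' (hE t) fun n => (hu n).rise t h1 h2
  · exact le_of_tendsto_of_tendsto' (hE t) (hE s) fun n => (hu n).anti s t h1 h2 h3
  · exact ge_of_tendsto' (hE _) fun n => (hu n).mid
  · exact le_of_tendsto_of_tendsto' (hE t) ((hE s).sub_const _) fun n => (hu n).fall s t h1 h2 h3

lemma dist_le_of_mem_humpSet (hL : 0 ≤ L) {u : C(Icc (0 : ℝ) L, ℝ)} (hu : u ∈ humpSet μ σ b hL)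
    (x y : Icc (0 : ℝ) L) : dist (u x) (u y) ≤ μ * dist x y := by
  wlog hxy : x ≤ y generalizing x y
  · rw [dist_comm, dist_comm x]
    exact this y x (le_of_not_ge hxy)
  have h := hu.lip x y x.2.1 hxy y.2.2
  rw [IccExtend_val, IccExtend_val] at h
  have e : dist x y = (y : ℝ) - x := by
    rw [dist_comm, Subtype.dist_eq, Real.dist_eq, abs_of_nonneg (sub_nonneg.2 (Subtype.coe_le_coe.2 hxy))]
  rwa [dist_comm, e, Real.dist_eq]

lemma isCompact_humpSet (hμ : 0 ≤ μ) (hL : 0 ≤ L) : IsCompact (humpSet μ σ b hL) := by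
  let e := ContinuousMap.isometryEquivBoundedOfCompact (Icc (0 : ℝ) L) ℝ
  have h1 : IsCompact (e.symm ⁻¹' humpSet μ σ b hL) := by
    refine BoundedContinuousFunction.arzela_ascoli₂ (Icc (-(μ * L)) (μ * L)) isCompact_Icc _
      ((isClosed_humpSet hL).preimage e.symm.continuous) (fun g x hg => ?_) ?_
    · have h2 := dist_le_of_mem_humpSet hL hg x ⟨0, le_rfl, hL⟩
      have h3 : (e.symm g) ⟨0, le_rfl, hL⟩ = 0 := by
        have := IsHump.zero hg
        rwa [IccExtend_of_mem hL _ ⟨le_rfl, hL⟩] at this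
      rw [h3, Real.dist_eq, sub_zero, Subtype.dist_eq, Real.dist_eq, sub_zero,
        abs_of_nonneg x.2.1] at h2
      exact abs_le.1 (h2.trans (mul_le_mul_of_nonneg_left x.2.2 hμ))
    · refine Metric.equicontinuous_of_continuity_modulus (fun d => μ * d) ?_ _
        fun x y g => dist_le_of_mem_humpSet hL g.2 x y
      have : Tendsto (fun d : ℝ => μ * d) (nhds 0) (nhds (μ * 0)) := tendsto_id.const_mul μ
      rwa [mul_zero] at this
  rw [← e.symm.toHomeomorph.isCompact_preimage]
  exact h1

lemma humpSet_nonempty (hL : 0 ≤ L) (hσ : 0 < σ) (hσμ : σ ≤ μ) (hb : 0 < b) (hb2 : 2 * b ≤ 1)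
    (hbL : 1 + b ≤ L) : (humpSet μ σ b hL).Nonempty := by
  let U : ℝ → ℝ := fun t => σ * min t (2 - t)
  have hU : IsHump μ σ b L U := by
    have hr : ∀ t, t ≤ 1 → U t = σ * t := fun t ht => by
      simp only [U]; rw [min_eq_left (by linarith)]
    have hl : ∀ t, 1 ≤ t → U t = σ * (2 - t) := fun t ht => by
      simp only [U]; rw [min_eq_right (by linarith)]
    have hmul : ∀ x : ℝ, 0 ≤ x → σ * x ≤ μ * x := fun x hx => mul_le_mul_of_nonneg_right hσμ hx
    refine ⟨by rw [hr 0 zero_le_one, mul_zero], fun s t h1 h2 h3 => ?_, fun s t h1 h2 h3 => ?_,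
      fun t h1 h2 => ?_, fun s t h1 h2 h3 => ?_, ?_, fun s t h1 h2 h3 => ?_⟩
    · have hm : |min t (2 - t) - min s (2 - s)| ≤ t - s := by
        rw [abs_le]
        constructor <;>
          rcases min_cases t (2 - t) with ⟨e1, _⟩ | ⟨e1, _⟩ <;>
          rcases min_cases s (2 - s) with ⟨e2, _⟩ | ⟨e2, _⟩ <;> rw [e1, e2] <;> linarith
      calc |U t - U s| = σ * |min t (2 - t) - min s (2 - s)| := by
            simp only [U]
            rw [← mul_sub, abs_mul, abs_of_pos hσ]
        _ ≤ σ * (t - s) := mul_le_mul_of_nonneg_left hm hσ.le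
        _ ≤ μ * (t - s) := hmul _ (by linarith)
    · rw [hr s (h2.trans h3), hr t h3]
      exact mul_le_mul_of_nonneg_left h2 hσ.le
    · rw [hr t (by linarith)]
    · rw [hl s h1, hl t (h1.trans h2)]
      exact mul_le_mul_of_nonneg_left (by linarith) hσ.le
    · rw [hl _ (by linarith)]
      exact mul_le_mul_of_nonneg_left (by linarith) hσ.le
    · rw [hl s (by linarith), hl t (by linarith)]
      linarith
  refine ⟨⟨fun t => U t, by fun_prop⟩, ?_⟩
  have hE : ∀ t, 0 ≤ t → t ≤ L →
      IccExtend hL (⟨fun t => U t, by fun_prop⟩ : C(Icc (0 : ℝ) L, ℝ)) t = U t :=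
    fun t h0 h1 => by rw [IccExtend_of_mem hL _ ⟨h0, h1⟩]; rfl
  exact hU.congr hbL hb hE

end HumpSet

/-! ### Fixed pairs of humps -/

section FixedPoint

variable {f : ℝ → ℝ} {μ σ b L : ℝ}

/-- One step of the fixed point iteration: the primitive of `humpSlope`, as an element of the space of
continuous functions on `[0, L]`, depends continuously on all data. -/
lemma exists_continuous_step (hf : Continuous f) (hL : 0 ≤ L) {X : Type*} [TopologicalSpace X]
    [FirstCountableTopology X] (u v : X → C(Icc (0 : ℝ) L, ℝ)) (z : X → ℝ) (hu : Continuous u)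
    (hv : Continuous v) (hz : Continuous z) :
    ∃ G : X → C(Icc (0 : ℝ) L, ℝ), Continuous G ∧ ∀ x t, 0 ≤ t → t ≤ L → IccExtend hL (G x) t =
      ∫ s in (0 : ℝ)..t, humpSlope f σ b (z x) (IccExtend hL (u x)) (IccExtend hL (v x)) s := by
  have hE : ∀ w : X → C(Icc (0 : ℝ) L, ℝ), Continuous w →
      Continuous fun q : X × ℝ => IccExtend hL (w q.1) q.2 := fun w hw =>
    (hw.comp continuous_fst).eval (continuous_projIcc.comp continuous_snd)
  have hs : Continuous (Function.uncurry fun (x : X) (s : ℝ) =>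
      humpSlope f σ b (z x) (IccExtend hL (u x)) (IccExtend hL (v x)) s) := by
    have h1 : Continuous fun q : X × ℝ => IccExtend hL (u q.1) (z q.1 + min (q.2 - 1) 0) :=
      (hE u hu).comp (g := fun q : X × ℝ => IccExtend hL (u q.1) q.2)
        (f := fun q : X × ℝ => (q.1, z q.1 + min (q.2 - 1) 0)) (by fun_prop)
    have h2 : Continuous fun q : X × ℝ => IccExtend hL (v q.1) (max (q.2 - 1) 0) :=
      (hE v hv).comp (g := fun q : X × ℝ => IccExtend hL (v q.1) q.2)
        (f := fun q : X × ℝ => (q.1, max (q.2 - 1) 0)) (by fun_prop)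
    unfold humpSlope Function.uncurry
    fun_prop
  have hI := intervalIntegral.continuous_parametric_primitive_of_continuous
    (μ := MeasureTheory.volume) (a₀ := 0) hs
  let H : C(X × Icc (0 : ℝ) L, ℝ) :=
    ⟨_, hI.comp (continuous_fst.prodMk (continuous_subtype_val.comp continuous_snd))⟩
  refine ⟨H.curry, H.curry.continuous, fun x t h0 h1 => ?_⟩
  rw [IccExtend_of_mem hL _ ⟨h0, h1⟩]
  rfl

/-- Simultaneous existence of the two humps of a periodic solution, from a fixed point of the pair
of steps with `f` and its reflection `x ↦ -f (-x)`. -/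
lemma exists_fixed_humps (hf : IsFeedback f μ σ b) (hσ : 0 < σ) (hσμ : σ ≤ μ) (hb : 0 < b)
    (hb2 : 2 * b ≤ 1) (hbμ : 2 * σ * b + μ * b ≤ σ) (hbL : 1 + b ≤ L)
    (hL : 1 + b + μ * (1 + b) / σ ≤ L) :
    ∃ (u v : ℝ → ℝ) (z w : ℝ), Continuous u ∧ Continuous v ∧ IsHump μ σ b L u ∧
      IsHump μ σ b L v ∧ 1 + b ≤ z ∧ z ≤ L ∧ u z = 0 ∧ 1 + b ≤ w ∧ w ≤ L ∧ v w = 0 ∧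
      (∀ t, 0 ≤ t → t ≤ L →
        u t = ∫ s in (0 : ℝ)..t, humpSlope (fun x => -f (-x)) σ b w v u s) ∧
      ∀ t, 0 ≤ t → t ≤ L → v t = ∫ s in (0 : ℝ)..t, humpSlope f σ b z u v s := by
  have hL0 : 0 ≤ L := by linarith
  have hμ : 0 ≤ μ := by linarith
  have hc : ∀ u : C(Icc (0 : ℝ) L, ℝ), Continuous (IccExtend hL0 u) :=
    fun u => u.continuous.Icc_extend'
  have hZ : ∀ u : humpSet μ σ b hL0, ∃ z, 1 + b ≤ z ∧ z ≤ L ∧ IccExtend hL0 u.1 z = 0 :=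
    fun u => u.2.exists_zero hσ hb hb2 (hc _) hL hbL
  choose Z hZ1 hZ2 hZ3 using hZ
  have hZle : ∀ u v, σ * (Z v - Z u) ≤ dist u v := fun u v => by
    have h1 : |IccExtend hL0 u.1 (Z u) - IccExtend hL0 v.1 (Z u)| ≤ dist u v := by
      rw [← Real.dist_eq]
      exact ContinuousMap.dist_apply_le_dist _
    rcases v.2.zero_sub_le (hZ1 u) (hZ3 u) (hZ2 v) (hZ3 v) h1 with h | h
    · exact h
    · exact (mul_nonpos_of_nonneg_of_nonpos hσ.le (by linarith)).trans dist_nonneg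
  have hZc : Continuous Z := by
    refine (LipschitzWith.of_dist_le_mul (K := (σ⁻¹).toNNReal) fun u v => ?_).continuous
    rw [Real.coe_toNNReal _ (by positivity), Real.dist_eq, inv_mul_eq_div, le_div_iff₀ hσ]
    have h1 := hZle u v
    have h2 := hZle v u
    rw [dist_comm] at h2
    rcases abs_cases (Z u - Z v) with ⟨e, _⟩ | ⟨e, _⟩ <;> rw [e] <;> linarith
  let S := humpSet μ σ b hL0 ×ˢ humpSet μ σ b hL0
  let a : S → humpSet μ σ b hL0 := fun q => ⟨q.1.1, q.2.1⟩
  let c : S → humpSet μ σ b hL0 := fun q => ⟨q.1.2, q.2.2⟩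
  have ha : Continuous a := by fun_prop
  have hcc : Continuous c := by fun_prop
  have hfr := hf.reflect
  obtain ⟨G₁, hG₁, hG₁'⟩ := exists_continuous_step (σ := σ) (b := b) hfr.cont hL0
    (fun q => (c q).1) (fun q => (a q).1) (fun q => Z (c q)) (by fun_prop) (by fun_prop)
    (by fun_prop)
  obtain ⟨G₂, hG₂, hG₂'⟩ := exists_continuous_step (σ := σ) (b := b) hf.cont hL0
    (fun q => (a q).1) (fun q => (c q).1) (fun q => Z (a q)) (by fun_prop) (by fun_prop)
    (by fun_prop)
  have hM₁ : ∀ q, G₁ q ∈ humpSet μ σ b hL0 := fun q =>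
    (isHump_step hfr hσ hb hb2 hbμ hbL (c q).2 (hc _) (a q).2.zero (hc _) (hZ1 _) (hZ2 _)
      (hZ3 _)).congr hbL hb (hG₁' q)
  have hM₂ : ∀ q, G₂ q ∈ humpSet μ σ b hL0 := fun q =>
    (isHump_step hf hσ hb hb2 hbμ hbL (a q).2 (hc _) (c q).2.zero (hc _) (hZ1 _) (hZ2 _)
      (hZ3 _)).congr hbL hb (hG₂' q)
  have hne := humpSet_nonempty hL0 hσ hσμ hb hb2 hbL
  have hK := isCompact_humpSet (σ := σ) (b := b) hμ hL0
  have hC := convex_humpSet (μ := μ) (σ := σ) (b := b) hL0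
  obtain ⟨q, hq⟩ := schauder (hK.prod hK) (hC.prod hC) (hne.prod hne)
    (fun q : S => ⟨(G₁ q, G₂ q), hM₁ q, hM₂ q⟩) (by fun_prop)
  have hq1 : G₁ q = (a q).1 := congrArg (fun r : S => r.1.1) hq
  have hq2 : G₂ q = (c q).1 := congrArg (fun r : S => r.1.2) hq
  refine ⟨IccExtend hL0 (a q).1, IccExtend hL0 (c q).1, Z (a q), Z (c q), hc _, hc _, (a q).2,
    (c q).2, hZ1 _, hZ2 _, hZ3 _, hZ1 _, hZ2 _, hZ3 _, fun t h0 h1 => ?_, fun t h0 h1 => ?_⟩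
  · rw [← hG₁' q t h0 h1, hq1]
  · rw [← hG₂' q t h0 h1, hq2]

/-- The SOP solution starts, at time `0`, with a hump. -/
lemma exists_isSOP_isHump (hf : IsFeedback f μ σ b) (hσ : 0 < σ) (hσμ : σ ≤ μ) (hb : 0 < b)
    (hb2 : 2 * b ≤ 1) (hbμ : 2 * σ * b + μ * b ≤ σ) (hbL : 1 + b ≤ L)
    (hL : 1 + b + μ * (1 + b) / σ ≤ L) :
    ∃ (p u : ℝ → ℝ), IsSOP f p ∧ IsHump μ σ b L u ∧ ∀ t, 0 ≤ t → t ≤ 1 → p t = u t := by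
  obtain ⟨u, v, z, w, huc, hvc, hu, hv, hz, hzL, huz, hw, hwL, hvw, hu', hv'⟩ :=
    exists_fixed_humps hf hσ hσμ hb hb2 hbμ hbL hL
  have hfr := hf.reflect
  have hfc := hf.cont
  have hs1 : Continuous (humpSlope (fun x => -f (-x)) σ b w v u) := by unfold humpSlope; fun_prop
  have hs2 : Continuous (humpSlope f σ b z u v) := by unfold humpSlope; fun_prop
  -- The primitives extend the humps to functions that are differentiable at the endpoints as well.
  let U : ℝ → ℝ := fun t => ∫ s in (0 : ℝ)..t, humpSlope (fun x => -f (-x)) σ b w v u s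
  let V : ℝ → ℝ := fun t => ∫ s in (0 : ℝ)..t, humpSlope f σ b z u v s
  have dU : ∀ t, HasDerivAt U (humpSlope (fun x => -f (-x)) σ b w v u t) t :=
    fun t => hs1.integral_hasStrictDerivAt 0 t |>.hasDerivAt
  have dV : ∀ t, HasDerivAt V (humpSlope f σ b z u v t) t :=
    fun t => hs2.integral_hasStrictDerivAt 0 t |>.hasDerivAt
  have eU : ∀ t, 0 ≤ t → t ≤ L → u t = U t := hu'
  have eV : ∀ t, 0 ≤ t → t ≤ L → v t = V t := hv'
  obtain ⟨p, hp, hpU⟩ := exists_isSOP_of_humps f U V z w (by linarith) (by linarith)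
    (by rw [← eU 0 le_rfl (by linarith), hu.zero]) (by rw [← eU z (by linarith) hzL, huz])
    (by rw [← eV 0 le_rfl (by linarith), hv.zero]) (by rw [← eV w (by linarith) hwL, hvw])
    (fun t h0 h1 => by
      rw [← eU t h0.le (by linarith)]
      exact hu.pos hσ hb hb2 hzL huz h0 h1)
    (fun t h0 h1 => by
      rw [← eV t h0.le (by linarith)]
      exact hv.pos hσ hb hb2 hwL hvw h0 h1)
    (fun t h0 h1 => by
      have := dU t
      rwa [humpSlope_of_le_one hfr hσ hb hu.zero h1, neg_neg, eV _ (by linarith) (by linarith)] at this)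
    (fun t h0 h1 => by
      have := dU t
      rwa [humpSlope_of_isHump hfr hσ hb hb2 hvw hu hzL huz h0 h1, neg_neg, neg_neg,
        eU _ (by linarith) (by linarith)] at this)
    (fun t h0 h1 => by
      have := dV t
      rwa [humpSlope_of_le_one hf hσ hb hv.zero h1, eU _ (by linarith) (by linarith)] at this)
    (fun t h0 h1 => by
      have := dV t
      rwa [humpSlope_of_isHump hf hσ hb hb2 huz hv hwL hvw h0 h1,
        eV _ (by linarith) (by linarith)] at this)
  exact ⟨p, u, hp, hu, fun t h0 h1 => by rw [hpU t h0 (by linarith), eU t h0 (by linarith)]⟩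

end FixedPoint

/-! ### The periodic solution -/

theorem statement_8 (f : ℝ → ℝ) (μ β σ : ℝ) (hμ : 0 < μ) (hβ : 0 < β) (hσ : 0 < σ)
    (hH : HypH f) (hH' : HypH' f μ β σ) (hβσ : β < σ / (2 + μ / σ))
    (γ : ℝ) (hγ : 0 < γ) (hγ1 : γ + β / σ < 1)
    (hγ2 : β ≤ (σ - (σ + μ) * γ) / (2 + μ / σ)) :
    ∃ (p : ℝ → ℝ) (z : ℝ), IsSOP f p ∧ p z = 0 ∧
      MemK μ (fun s => p (z + 1 + s)) ∧
      ∀ s ∈ Icc (-1 + γ) (-(β / σ)), σ * s + σ * (1 - γ) < p (z + 1 + s) := by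
  obtain ⟨b, rfl⟩ : ∃ b, β = σ * b := ⟨β / σ, by field_simp⟩
  rw [mul_div_cancel_left₀ b hσ.ne'] at *
  have hb : 0 < b := pos_of_mul_pos_right hβ hσ.le
  have hσμ : σ ≤ μ := (hH'.2 (σ * b) (le_abs_self _)).trans (hH'.1 _)
  have hbμ : 2 * σ * b + μ * b ≤ σ := by
    rw [lt_div_iff₀ (by positivity)] at hβσ
    have : σ * b * (2 + μ / σ) = 2 * σ * b + μ * b := by field_simp
    linarith
  have hb2 : 2 * b ≤ 1 := by nlinarith [mul_pos hμ hb]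
  have hf : IsFeedback f μ σ b := ⟨hH.1, hH.2.1, hH'.1, hH'.2⟩
  have hbL : 1 + b ≤ 1 + b + μ * (1 + b) / σ := by
    have : 0 ≤ μ * (1 + b) / σ := by positivity
    linarith
  obtain ⟨p, u, hp, hu, hpu⟩ := exists_isSOP_isHump hf hσ hσμ hb hb2 hbμ hbL le_rfl
  have hs : ∀ s, -1 ≤ s → s ≤ 0 → p (0 + 1 + s) = u (1 + s) := fun s h0 h1 => by
    rw [zero_add, hpu _ (by linarith) (by linarith)]
  have hpc : Continuous p := continuous_iff_continuousAt.2 fun t => (hp.1 t).continuousAt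
  refine ⟨p, 0, hp, by rw [hpu 0 le_rfl zero_le_one, hu.zero], ⟨by fun_prop, ?_, ?_, ?_⟩, ?_⟩
  · simp only
    rw [hs (-1) le_rfl (by norm_num), add_neg_cancel, hu.zero]
  · intro s h1 t h2 h
    simp only
    rw [hs s h1.1 h1.2, hs t h2.1 h2.2]
    exact hu.mono _ _ (by linarith [h1.1]) (by linarith) (by linarith [h2.2])
  · intro s h1
    simp only
    rw [hs s h1.1 h1.2]
    have h2 := hu.lip 0 (1 + s) le_rfl (by linarith [h1.1]) (by linarith [h1.2])
    rw [hu.zero, sub_zero, sub_zero] at h2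
    nlinarith [h1.2]
  · intro s h1
    rw [hs s (by linarith [h1.1]) (by linarith [h1.2])]
    have h2 := hu.rise (1 + s) (by linarith [h1.1]) (by linarith [h1.2])
    nlinarith [mul_pos hσ hγ]
end

section
/- Suppose f satisfies (H) and is bounded above by M > 0, and suppose there is ε > 0 such that f is differentiable on [-ε, ε] with |f'(ξ)| < 1 for all ξ ∈ [-ε, ε]. Let x be a solution on [-1,∞) of x'(t) = f(x(t-1)) whose initial segment φ belongs to K, with 0 < sup_{s}|φ(s)| ≤ ε. If x has at least two positive zeros and z₁ < z₂ denote the first two, then sup_{t ∈ [z₂, z₂+1]} |x(t)| < sup_{s ∈ [-1,0]} |φ(s)|. -/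
/-!
Let `S = x 0 > 0`, the maximum of `|φ|`. By the mean value theorem and `f 0 = 0`, the derivative
bound makes `f` strictly shrink absolute values on `[-ε, ε] \ {0}` (`abs_apply_lt`).

Negative feedback makes `x` nonincreasing on `[0, z₁ + 1]`, since the delayed argument is
nonnegative there. Hence `z₁ + 1 < z₂`, and the mean value theorem on `[z₁, z₁ + 1]` writes
`x (z₁ + 1)` as a value of `f` on `[0, S]`, so `-S < x (z₁ + 1) < 0`. On `[z₁ + 1, z₂ + 1]` the
delayed argument is nonpositive and `x` is nondecreasing; thus `x ≥ x (z₁ + 1)` on `[z₁, z₂]`, and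
the mean value theorem on `[z₂, z₂ + 1]` gives `x (z₂ + 1) < S`. By monotonicity `x (z₂ + 1)` is the
maximum of `|x|` on `[z₂, z₂ + 1]`.
-/

open Set Filter

/-- A function vanishing at `0` with derivative of absolute value less than `1` on `[-ε, ε]`
strictly shrinks absolute values of nonzero points there. -/
lemma abs_apply_lt {f : ℝ → ℝ} {ε : ℝ} (h0 : f 0 = 0)
    (hdiff : ∀ ξ ∈ Icc (-ε) ε, ∃ d : ℝ, HasDerivWithinAt f d (Icc (-ε) ε) ξ ∧ |d| < 1)
    {y : ℝ} (hy0 : y ≠ 0) (hy : |y| ≤ ε) : |f y| < |y| := by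
  have hyε := abs_le.mp hy
  have hcont : ContinuousOn f (Icc (-ε) ε) := fun ξ hξ => by
    obtain ⟨d, hd, -⟩ := hdiff ξ hξ
    exact hd.continuousWithinAt
  have hd : ∀ ξ ∈ Ioo (-ε) ε, ∃ d : ℝ, HasDerivAt f d ξ ∧ |d| < 1 := fun ξ hξ => by
    obtain ⟨d, hd, hd1⟩ := hdiff ξ (Ioo_subset_Icc_self hξ)
    exact ⟨d, hd.hasDerivAt (Icc_mem_nhds hξ.1 hξ.2), hd1⟩
  choose! g hg hg1 using hd
  have hpos : 0 < |y| := abs_pos.mpr hy0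
  have key : ∃ c ∈ Ioo (-ε) ε, f y = g c * y := by
    rcases lt_or_gt_of_ne hy0 with h | h
    · obtain ⟨c, hc, hcs⟩ := exists_hasDerivAt_eq_slope f g h
        (hcont.mono (Icc_subset_Icc hyε.1 (by linarith)))
        (fun ξ hξ => hg ξ ⟨by linarith [hξ.1], by linarith [hξ.2]⟩)
      refine ⟨c, ⟨by linarith [hc.1], by linarith [hc.2]⟩, ?_⟩
      rw [hcs, h0]
      field_simp
      ring
    · obtain ⟨c, hc, hcs⟩ := exists_hasDerivAt_eq_slope f g h
        (hcont.mono (Icc_subset_Icc (by linarith) hyε.2))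
        (fun ξ hξ => hg ξ ⟨by linarith [hξ.1], by linarith [hξ.2]⟩)
      refine ⟨c, ⟨by linarith [hc.1], by linarith [hc.2]⟩, ?_⟩
      rw [hcs, h0]
      field_simp
      ring
  obtain ⟨c, hc, he⟩ := key
  rw [he, abs_mul]
  nlinarith [hg1 c hc]

/-- The mean value theorem over one delay interval. -/
lemma IsSolOn.exists_sub_eq {f x : ℝ → ℝ} (hx : IsSolOn f x) {a : ℝ} (ha : 0 ≤ a) :
    ∃ c ∈ Ioo (a - 1) a, x (a + 1) - x a = f (x c) := by
  obtain ⟨c, hc, h⟩ := exists_hasDerivAt_eq_slope x (fun t => f (x (t - 1)))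
    (show a < a + 1 by linarith)
    (hx.1.mono fun t ht => show (-1 : ℝ) ≤ t by linarith [ht.1])
    (fun t ht => hx.2 t (by linarith [ht.1]))
  refine ⟨c - 1, ⟨by linarith [hc.1], by linarith [hc.2]⟩, ?_⟩
  rw [h]
  ring

lemma IsSolOn.antitoneOn {f x : ℝ → ℝ} (hx : IsSolOn f x) {a b : ℝ} (ha : 0 ≤ a)
    (h : ∀ t ∈ Ioo (a - 1) (b - 1), f (x t) ≤ 0) : AntitoneOn x (Icc a b) := by
  have hd : ∀ t ∈ interior (Icc a b), HasDerivAt x (f (x (t - 1))) t := fun t ht => by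
    rw [interior_Icc] at ht
    exact hx.2 t (by linarith [ht.1])
  refine antitoneOn_of_deriv_nonpos (convex_Icc a b)
    (hx.1.mono fun t ht => show (-1 : ℝ) ≤ t by linarith [ht.1])
    (fun t ht => (hd t ht).differentiableAt.differentiableWithinAt) fun t ht => ?_
  rw [(hd t ht).deriv]
  rw [interior_Icc] at ht
  exact h _ ⟨by linarith [ht.1], by linarith [ht.2]⟩

lemma IsSolOn.monotoneOn {f x : ℝ → ℝ} (hx : IsSolOn f x) {a b : ℝ} (ha : 0 ≤ a)
    (h : ∀ t ∈ Ioo (a - 1) (b - 1), 0 ≤ f (x t)) : MonotoneOn x (Icc a b) := by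
  have hd : ∀ t ∈ interior (Icc a b), HasDerivAt x (f (x (t - 1))) t := fun t ht => by
    rw [interior_Icc] at ht
    exact hx.2 t (by linarith [ht.1])
  refine monotoneOn_of_deriv_nonneg (convex_Icc a b)
    (hx.1.mono fun t ht => show (-1 : ℝ) ≤ t by linarith [ht.1])
    (fun t ht => (hd t ht).differentiableAt.differentiableWithinAt) fun t ht => ?_
  rw [(hd t ht).deriv]
  rw [interior_Icc] at ht
  exact h _ ⟨by linarith [ht.1], by linarith [ht.2]⟩

theorem statement_9 (f : ℝ → ℝ) (M : ℝ) (hM : 0 < M)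
    (hH : HypH f) (hbd : ∀ y : ℝ, f y ≤ M)
    (ε : ℝ) (hε : 0 < ε)
    (hdiff : ∀ ξ ∈ Icc (-ε) ε, ∃ d : ℝ,
      HasDerivWithinAt f d (Icc (-ε) ε) ξ ∧ |d| < 1)
    (x : ℝ → ℝ) (hx : IsSolOn f x) (hK : MemK M x)
    (hne : ∃ s ∈ Icc (-1 : ℝ) 0, x s ≠ 0)
    (hsmall : ∀ s ∈ Icc (-1 : ℝ) 0, |x s| ≤ ε)
    (z₁ z₂ : ℝ) (hz₁ : 0 < z₁) (hz₁₂ : z₁ < z₂)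
    (hxz₁ : x z₁ = 0) (hxz₂ : x z₂ = 0)
    (hfirst : ∀ t ∈ Ioo 0 z₁, x t ≠ 0) (hsecond : ∀ t ∈ Ioo z₁ z₂, x t ≠ 0) :
    sSup ((fun t => |x t|) '' Icc z₂ (z₂ + 1)) <
      sSup ((fun s => |x s|) '' Icc (-1 : ℝ) 0) := by
  obtain ⟨hfc, hneg, -, -⟩ := hH
  obtain ⟨-, hφ1, hmono, -⟩ := hK
  have m1 : (-1 : ℝ) ∈ Icc (-1 : ℝ) 0 := by norm_num
  have m0 : (0 : ℝ) ∈ Icc (-1 : ℝ) 0 := by norm_num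
  have hnp : ∀ y, 0 < y → f y < 0 := fun y hy => by nlinarith [hneg y hy.ne']
  have hpn : ∀ y, y < 0 → 0 < f y := fun y hy => by nlinarith [hneg y hy.ne]
  have hf0 : f 0 = 0 := by
    -- By continuity, `f 0` is a limit of negative values from the right of `0` and of positive
    -- values from the left.
    apply le_antisymm
    · refine le_of_tendsto (hfc.continuousWithinAt (s := Ioi 0) (x := 0)).tendsto ?_
      filter_upwards [self_mem_nhdsWithin] with y hy using (hnp y hy).le
    · refine ge_of_tendsto (hfc.continuousWithinAt (s := Iio 0) (x := 0)).tendsto ?_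
      filter_upwards [self_mem_nhdsWithin] with y hy using (hpn y hy).le
  have hnp' : ∀ y, 0 ≤ y → f y ≤ 0 := fun y hy => by
    rcases hy.eq_or_lt with h | h
    · rw [← h, hf0]
    · exact (hnp y h).le
  have hpn' : ∀ y, y ≤ 0 → 0 ≤ f y := fun y hy => by
    rcases hy.eq_or_lt with h | h
    · rw [h, hf0]
    · exact (hpn y h).le
  have hφ0 : ∀ s ∈ Icc (-1 : ℝ) 0, 0 ≤ x s := fun s hs => hφ1 ▸ hmono m1 hs hs.1
  have hφS : ∀ s ∈ Icc (-1 : ℝ) 0, x s ≤ x 0 := fun s hs => hmono hs m0 hs.2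
  have hS : 0 < x 0 := by
    obtain ⟨s, hs, hs0⟩ := hne
    exact lt_of_lt_of_le (lt_of_le_of_ne (hφ0 s hs) hs0.symm) (hφS s hs)
  have hSε : x 0 ≤ ε := (le_abs_self _).trans (hsmall 0 m0)
  have hcont : ∀ {a b : ℝ}, 0 ≤ a → ContinuousOn x (Icc a b) := fun ha =>
    hx.1.mono fun t ht => show (-1 : ℝ) ≤ t by linarith [ht.1]
  have hpos : ∀ t ∈ Icc (-1 : ℝ) z₁, 0 ≤ x t := by
    intro t ht
    by_contra! hlt
    rcases le_or_gt t 0 with h0 | h0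
    · exact absurd (hφ0 t ⟨ht.1, h0⟩) (not_le.mpr hlt)
    have htz : t < z₁ := lt_of_le_of_ne ht.2 fun h => by
      rw [h, hxz₁] at hlt
      exact lt_irrefl _ hlt
    obtain ⟨c, hc, hc0⟩ := intermediate_value_Icc' h0.le (hcont le_rfl) ⟨hlt.le, hS.le⟩
    have hc0' : c ≠ 0 := fun h => by
      rw [h] at hc0
      exact hS.ne' hc0
    exact hfirst c ⟨lt_of_le_of_ne hc.1 hc0'.symm, hc.2.trans_lt htz⟩ hc0
  have hanti : AntitoneOn x (Icc 0 (z₁ + 1)) := hx.antitoneOn le_rfl fun t ht =>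
    hnp' _ (hpos t ⟨by linarith [ht.1], by linarith [ht.2]⟩)
  have hle : ∀ t ∈ Icc z₁ (z₁ + 1), x t ≤ 0 := fun t ht =>
    hxz₁ ▸ hanti ⟨hz₁.le, by linarith⟩ ⟨by linarith [ht.1], ht.2⟩ ht.1
  have hz : z₁ + 1 < z₂ := by
    by_contra! h
    -- Otherwise `x` would vanish at the midpoint, squeezed between `x z₁ = 0` and `x z₂ = 0`.
    have hmid : (z₁ + z₂) / 2 ∈ Ioo z₁ z₂ := ⟨by linarith, by linarith⟩
    refine hsecond _ hmid (le_antisymm (hle _ ⟨hmid.1.le, by linarith⟩) ?_)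
    have := hanti (a := (z₁ + z₂) / 2) (b := z₂) ⟨by linarith, by linarith⟩
      ⟨by linarith, h⟩ hmid.2.le
    rwa [hxz₂] at this
  have hm : x (z₁ + 1) < 0 := lt_of_le_of_ne (hle _ ⟨by linarith, le_rfl⟩)
    (hsecond _ ⟨by linarith, hz⟩)
  have hnonpos : ∀ t ∈ Icc z₁ z₂, x t ≤ 0 := by
    intro t ht
    rcases le_or_gt t (z₁ + 1) with h | h
    · exact hle t ⟨ht.1, h⟩
    by_contra! hlt
    have htz : t < z₂ := lt_of_le_of_ne ht.2 fun h => by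
      rw [h, hxz₂] at hlt
      exact lt_irrefl _ hlt
    obtain ⟨c, hc, hc0⟩ := intermediate_value_Icc h.le (hcont (by linarith)) ⟨hm.le, hlt.le⟩
    exact hsecond c ⟨by linarith [hc.1], hc.2.trans_lt htz⟩ hc0
  have hmonoI : MonotoneOn x (Icc (z₁ + 1) (z₂ + 1)) := hx.monotoneOn (by linarith) fun t ht =>
    hpn' _ (hnonpos t ⟨by linarith [ht.1], by linarith [ht.2]⟩)
  have hmS : -x 0 < x (z₁ + 1) := by
    obtain ⟨c, hc, he⟩ := hx.exists_sub_eq hz₁.le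
    have hc0 : 0 ≤ x c := hpos c ⟨by linarith [hc.1], hc.2.le⟩
    have hcS : x c ≤ x 0 := by
      rcases le_or_gt c 0 with h | h
      · exact hφS c ⟨by linarith [hc.1], h⟩
      · exact hanti ⟨le_rfl, by linarith⟩ ⟨h.le, by linarith [hc.2]⟩ h.le
    rcases hc0.eq_or_lt with h | h
    · rw [← h, hf0] at he
      linarith
    · have := abs_apply_lt hf0 hdiff h.ne' (by rw [abs_of_pos h]; linarith)
      rw [abs_of_pos h] at this
      linarith [(abs_lt.mp this).1]
  have hend : x (z₂ + 1) < x 0 := by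
    obtain ⟨c, hc, he⟩ := hx.exists_sub_eq (hz₁.trans hz₁₂).le
    have hc0 : x c ≤ 0 := hnonpos c ⟨by linarith [hc.1], hc.2.le⟩
    have hcm : x (z₁ + 1) ≤ x c := by
      rcases le_or_gt c (z₁ + 1) with h | h
      · exact hanti ⟨by linarith [hc.1], h⟩ ⟨by linarith, le_rfl⟩ h
      · exact hmonoI ⟨le_rfl, by linarith⟩ ⟨h.le, by linarith [hc.2]⟩ h.le
    rcases hc0.eq_or_lt with h | h
    · rw [h, hf0] at he
      linarith
    · have := abs_apply_lt hf0 hdiff h.ne (by rw [abs_of_neg h]; linarith)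
      rw [abs_of_neg h] at this
      linarith [(abs_lt.mp this).2]
  have hL : sSup ((fun t => |x t|) '' Icc z₂ (z₂ + 1)) ≤ x (z₂ + 1) := by
    refine csSup_le ((nonempty_Icc.mpr (by linarith)).image _) ?_
    rintro _ ⟨t, ht, rfl⟩
    have h0 : x z₂ ≤ x t := hmonoI ⟨hz.le, by linarith⟩ ⟨by linarith [ht.1], ht.2⟩ ht.1
    rw [hxz₂] at h0
    simp only [abs_of_nonneg h0]
    exact hmonoI ⟨by linarith [ht.1], ht.2⟩ ⟨by linarith, le_rfl⟩ ht.2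
  have hR : x 0 ≤ sSup ((fun s => |x s|) '' Icc (-1 : ℝ) 0) := by
    refine (le_abs_self _).trans (le_csSup ⟨ε, ?_⟩ ⟨0, m0, rfl⟩)
    rintro _ ⟨s, hs, rfl⟩
    exact hsmall s hs
  exact hL.trans_lt (hend.trans_le hR)
end

section
/- Given reals a, c, δ, γ > 0 satisfying (i) c < min(a, δ), (ii) γ ≥ 4a and γ > δ, (iii) δ + (c/δ)·γ ≤ a, suppose f satisfies (H) and (H''). Then the equation x'(t) = f(x(t-1)) has an SOP solution with minimal period strictly greater than 4, and this minimal period equals z'' - z for some three consecutive zeros z < z' < z'' of the solution (consecutive meaning it has no zeros in (z, z') ∪ (z', z'')). -/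
/-!
The solution can be written down explicitly, so no fixed-point argument is needed. It is
antiperiodic, `p (t + τ) = -p t`, with `p = q` on `[0, τ]`, where `q` is a single positive bump with
`q 0 = q τ = 0` and `τ > 2`; its minimal period is `2 τ > 4`.

* On `[0, 1 - a/γ]` the bump rises with slope `γ`, because one time unit earlier `-p` passes through
  `[a, 2a - c]`. On `[1 - a/γ, 1 + a/γ]` the slope is `f (γ (t - 1))`, odd about `t = 1`, so
  `q (1 + a/γ) = γ - a`. A further time `a/γ` costs at most `a`; as `γ ≥ 4a`, this gives
  `q (1 + 2a/γ) ≥ 2a`.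
* From then on the delayed value lies in `[2a, γ]` and `q` descends with slope `-δ`, until one time
  unit after the moment `s₁` at which `q` comes down to `2a`. At `s₂ = s₁ + c/δ` the value is
  `2a - c`. On `[s₁ + 1, s₂ + 1]` the slope is between `-γ` and `0`, so
  `q (s₂ + 1) ≥ 2a - δ - (c/δ) γ ≥ a`.
* Hence `q` stays in `[a, 2a - c]` on `[s₂, s₂ + 1]`, which forces slope `-γ` after `s₂ + 1`, and `q`
  vanishes at `τ = s₂ + 1 + q (s₂ + 1) / γ > 2`. The last unit interval before `τ` is exactly the
  history that, after a change of sign, produces the initial rise of `q`.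

Since the slope is known as an explicit function of time, `q` is the integral of `f ∘ w` for an
explicit continuous `w` (`exists_bump`). The lemma `sop_of_bump` extends a bump antiperiodically.
-/

open Set Filter

/-- A lower bound on the derivative on `[u, v]` bounds the increment from below. -/
lemma incr_ge {q D : ℝ → ℝ} (hq : ∀ t, HasDerivAt q (D t) t) {u v k : ℝ} (huv : u ≤ v)
    (h : ∀ t ∈ Icc u v, k ≤ D t) : k * (v - u) ≤ q v - q u := by
  refine (convex_Icc u v).mul_sub_le_image_sub_of_le_deriv
    (fun t _ => (hq t).continuousAt.continuousWithinAt)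
    (fun t _ => (hq t).differentiableAt.differentiableWithinAt) ?_ u (left_mem_Icc.2 huv) v
    (right_mem_Icc.2 huv) huv
  intro t ht
  rw [(hq t).deriv]
  exact h t (interior_subset ht)

lemma incr_le {q D : ℝ → ℝ} (hq : ∀ t, HasDerivAt q (D t) t) {u v k : ℝ} (huv : u ≤ v)
    (h : ∀ t ∈ Icc u v, D t ≤ k) : q v - q u ≤ k * (v - u) := by
  have := incr_ge (q := fun t => -q t) (D := fun t => -D t) (fun t => (hq t).neg) (k := -k) huv
    (fun t ht => neg_le_neg (h t ht))
  linarith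

lemma incr_eq {q D : ℝ → ℝ} (hq : ∀ t, HasDerivAt q (D t) t) {u v k : ℝ} (huv : u ≤ v)
    (h : ∀ t ∈ Icc u v, D t = k) : q v - q u = k * (v - u) :=
  le_antisymm (incr_le hq huv fun t ht => (h t ht).le) (incr_ge hq huv fun t ht => (h t ht).ge)

lemma exists_primitive {D : ℝ → ℝ} (hD : Continuous D) :
    ∃ q : ℝ → ℝ, (∀ t, HasDerivAt q (D t) t) ∧ q 0 = 0 :=
  ⟨fun t => ∫ s in (0 : ℝ)..t, D s, fun t => (hD.integral_hasStrictDerivAt 0 t).hasDerivAt, by simp⟩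

/-- The antiperiodic extension of a bump `q` on `[0, τ]` is an SOP solution of minimal period `2 τ`,
provided the slope `D` of `q` is the one prescribed by the delay equation. For `t ∈ [0, 1]` the
delayed value of the extension is `-q (t - 1 + τ)`. The hypothesis on `[-η, 0]` says that the
extension coincides with `q` also slightly to the left of `0`, which makes it differentiable at the
gluing points. -/
lemma sop_of_bump {f q D : ℝ → ℝ} {τ η : ℝ} (hodd : ∀ x, f (-x) = -f x) (hτ : 2 < τ)
    (hη : 0 < η) (hητ : η < τ) (hq : ∀ t, HasDerivAt q (D t) t) (hq0 : q 0 = 0)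
    (hpos : ∀ t ∈ Ioo 0 τ, 0 < q t) (hglue : ∀ t ∈ Icc (-η) 0, q t = -q (t + τ))
    (hD1 : ∀ t ∈ Icc 1 τ, D t = f (q (t - 1)))
    (hD0 : ∀ t ∈ Icc 0 1, D t = -f (q (t - 1 + τ))) :
    ∃ (p : ℝ → ℝ) (z z' z'' : ℝ), IsSOP f p ∧
      z < z' ∧ z' < z'' ∧ p z = 0 ∧ p z' = 0 ∧ p z'' = 0 ∧
      (∀ t, t ∈ Ioo z z' ∪ Ioo z' z'' → p t ≠ 0) ∧
      MinPeriod p (z'' - z) ∧ 4 < z'' - z := by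
  have hτ0 : 0 < τ := by linarith
  obtain ⟨p, hp⟩ : ∃ p : ℝ → ℝ, ∀ t, p t =
      (((toIcoDiv hτ0 0 t).negOnePow : ℤ) : ℝ) * q (toIcoMod hτ0 0 t) := ⟨_, fun _ => rfl⟩
  have hanti : ∀ t, p (t + τ) = -p t := by
    intro t
    rw [hp, hp, toIcoDiv_add_right, toIcoMod_add_right, Int.negOnePow_succ]
    push_cast
    ring
  have hpq : ∀ t ∈ Ico 0 τ, p t = q t := by
    intro t ht
    have h1 : toIcoMod hτ0 0 t = t := (toIcoMod_eq_self hτ0).2 (by simpa using ht)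
    have h2 : toIcoDiv hτ0 0 t = 0 :=
      toIcoDiv_eq_of_sub_zsmul_mem_Ico hτ0 (by simpa using ht)
    rw [hp, h1, h2]
    simp
  have hpq' : ∀ t ∈ Ico (-η) τ, p t = q t := by
    intro t ht
    rcases lt_or_ge t 0 with h | h
    · have h1 := hanti t
      have h2 := hpq (t + τ) ⟨by linarith [ht.1], by linarith⟩
      have h3 := hglue t ⟨ht.1, h.le⟩
      linarith
    · exact hpq t ⟨h, ht.2⟩
  have hzero : ∀ t, p t = 0 → ∃ n : ℤ, t = n * τ := by
    intro t ht
    rw [hp] at ht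
    have hm : toIcoMod hτ0 0 t ∈ Ico 0 τ := by
      simpa using toIcoMod_mem_Ico hτ0 0 t
    have hne : (((toIcoDiv hτ0 0 t).negOnePow : ℤ) : ℝ) ≠ 0 := by
      exact_mod_cast Units.ne_zero _
    have hqz := (mul_eq_zero.1 ht).resolve_left hne
    have hm0 : toIcoMod hτ0 0 t = 0 := by
      by_contra hcon
      have := hpos _ ⟨lt_of_le_of_ne hm.1 (Ne.symm hcon), hm.2⟩
      linarith
    refine ⟨toIcoDiv hτ0 0 t, ?_⟩
    have := toIcoMod_add_toIcoDiv_zsmul hτ0 0 t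
    rw [hm0, zsmul_eq_mul] at this
    linarith
  have hder0 : ∀ t ∈ Ico 0 τ, HasDerivAt p (f (p (t - 1))) t := by
    intro t ht
    have hval : f (p (t - 1)) = D t := by
      rcases le_or_gt 1 t with h | h
      · rw [hD1 t ⟨h, ht.2.le⟩, hpq (t - 1) ⟨by linarith, by linarith [ht.2]⟩]
      · rw [hD0 t ⟨ht.1, h.le⟩, ← hodd,
          ← hpq (t - 1 + τ) ⟨by linarith [ht.1], by linarith⟩, hanti, neg_neg]
    rw [hval]
    refine (hq t).congr_of_eventuallyEq ?_
    filter_upwards [Ioo_mem_nhds (show -η < t by linarith [ht.1]) ht.2] with s hs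
    exact hpq' s ⟨hs.1.le, hs.2⟩
  have hder : ∀ t, HasDerivAt p (f (p (t - 1))) t := by
    have hper : Function.Periodic (fun t => HasDerivAt p (f (p (t - 1))) t) τ := by
      intro t
      have hfun : (fun s => p (s + τ)) = fun s => -p s := funext hanti
      have hv : f (p (t + τ - 1)) = -f (p (t - 1)) := by
        rw [show t + τ - 1 = t - 1 + τ by ring, hanti, hodd]
      apply propext
      change HasDerivAt p (f (p (t + τ - 1))) (t + τ) ↔ HasDerivAt p (f (p (t - 1))) t
      rw [hv]
      constructor
      · intro h
        have h1 := h.comp_add_const t τ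
        rw [hfun] at h1
        simpa using h1.fun_neg
      · intro h
        have h1 : HasDerivAt (fun s => p (s + τ)) (-f (p (t - 1))) t := by
          rw [hfun]; exact h.neg
        have h2 : HasDerivAt (fun s => p (s + τ)) (-f (p (t - 1))) (t + τ - τ) := by
          simpa using h1
        simpa using h2.comp_sub_const (t + τ) τ
    intro t
    obtain ⟨y, hy, hty⟩ := hper.exists_mem_Ico₀ hτ0 t
    exact hty.symm ▸ hder0 y hy
  have hp0 : p 0 = 0 := by rw [hpq 0 ⟨le_rfl, hτ0⟩, hq0]
  have hpτ : p τ = 0 := by simpa [hp0] using hanti 0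
  have hp2τ : p (2 * τ) = 0 := by
    have := hanti τ
    rw [hpτ] at this
    simpa [two_mul] using this
  have hphalf : 0 < p 1 := by
    rw [hpq 1 ⟨by norm_num, by linarith⟩]
    exact hpos 1 ⟨by norm_num, by linarith⟩
  have hper2 : ∀ t, p (t + 2 * τ) = p t := by
    intro t
    rw [show t + 2 * τ = t + τ + τ by ring, hanti, hanti, neg_neg]
  refine ⟨p, 0, τ, 2 * τ, ⟨hder, ⟨2 * τ, by linarith, hper2⟩, ⟨1, 0, ?_⟩, ?_⟩, hτ0, by linarith,
    hp0, hpτ, hp2τ, ?_, ⟨by linarith, by simpa using hper2, ?_⟩, by linarith⟩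
  · rw [hp0]; exact hphalf.ne'
  · intro z z' hz hz' hne
    obtain ⟨m, rfl⟩ := hzero z hz
    obtain ⟨n, rfl⟩ := hzero z' hz'
    have hmn : m - n ≠ 0 := by
      intro h
      exact hne (by rw [sub_eq_zero.1 h])
    have h1 : (1 : ℝ) ≤ |((m - n : ℤ) : ℝ)| := by
      exact_mod_cast Int.one_le_abs hmn
    rw [← sub_mul, abs_mul, abs_of_pos hτ0, ← Int.cast_sub]
    nlinarith
  · rintro t (ht | ht)
    · rw [hpq t ⟨ht.1.le, ht.2⟩]
      exact (hpos t ht).ne'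
    · have h1 := hanti (t - τ)
      rw [sub_add_cancel, hpq (t - τ) ⟨by linarith [ht.1], by linarith [ht.2]⟩] at h1
      have := hpos (t - τ) ⟨by linarith [ht.1], by linarith [ht.2]⟩
      rw [h1]
      linarith
  · intro T hT hperT
    have hT0 : p T = 0 := by simpa [hp0] using hperT 0
    obtain ⟨n, rfl⟩ := hzero T hT0
    have hn : 0 < n := by
      have : (0 : ℝ) < n := pos_of_mul_pos_left hT hτ0.le
      exact_mod_cast this
    -- the half-period `τ` is excluded by the sign change
    have hn1 : n ≠ 1 := by
      rintro rfl
      have h1 := hperT 1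
      simp only [Int.cast_one, one_mul] at h1
      rw [hanti] at h1
      linarith
    have hn2 : (2 : ℝ) ≤ n := by
      have : 2 ≤ n := by omega
      exact_mod_cast this
    nlinarith

/-- After the rise and the first part of the descent, the bump is still at least `2a` high: the
slope is odd about `t = 1` on `[1 - a/γ, 1 + a/γ]`, so only the following time `a/γ` costs height. -/
lemma height_ge {f q D : ℝ → ℝ} {a γ : ℝ} (ha : 0 < a) (hγ : 0 < γ) (hγa : 4 * a ≤ γ)
    (hodd : ∀ x, f (-x) = -f x) (hbd : ∀ x ∈ Icc (0 : ℝ) (2 * a), |f x| ≤ γ)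
    (hq : ∀ t, HasDerivAt q (D t) t) (hq0 : q 0 = 0)
    (hD0 : ∀ t ∈ Icc 0 (1 - a / γ), D t = γ)
    (hD1 : ∀ t ∈ Icc (1 - a / γ) (1 + 2 * (a / γ)), D t = f (γ * (t - 1))) :
    2 * a ≤ q (1 + 2 * (a / γ)) := by
  have hb : 0 < a / γ := by positivity
  have hbγ : γ * (a / γ) = a := by field_simp
  have hb4 : 4 * (a / γ) ≤ 1 := by rw [← mul_div_assoc, div_le_one hγ]; exact hγa
  set b := a / γ
  have h1 := incr_eq hq (u := 0) (v := 1 - b) (by linarith) hD0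
  have h2 : q (1 + b) = q (1 - b) := by
    have hr : ∀ s, HasDerivAt (fun s => q (1 + s) - q (1 - s)) (D (1 + s) + D (1 - s)) s := by
      intro s
      have := ((hq (1 + s)).comp_const_add 1 s).fun_sub ((hq (1 - s)).comp_const_sub 1 s)
      simpa using this
    have h := incr_eq hr (u := 0) (v := b) (k := 0) hb.le (by
      intro s hs
      rw [hD1 _ ⟨by linarith [hs.1], by linarith [hs.2]⟩,
        hD1 _ ⟨by linarith [hs.2], by linarith [hs.1]⟩,
        show γ * (1 - s - 1) = -(γ * (1 + s - 1)) by ring, hodd]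
      ring)
    simp at h
    linarith
  have h3 := incr_ge hq (u := 1 + b) (v := 1 + 2 * b) (k := -γ) (by linarith) (by
    intro t ht
    rw [hD1 t ⟨by linarith [ht.1], ht.2⟩]
    refine (abs_le.1 (hbd _ ⟨?_, ?_⟩)).1
    · exact mul_nonneg hγ.le (by linarith [ht.1])
    · nlinarith [ht.2])
  nlinarith

set_option maxHeartbeats 800000 in
/-- Existence of the bump, with `η = a/γ` in the gluing condition. -/
lemma exists_bump {f : ℝ → ℝ} {a c δ γ : ℝ} (ha : 0 < a) (hc : 0 < c) (hδ : 0 < δ) (hγ : 0 < γ)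
    (hcδ : c < δ) (hγa : 4 * a ≤ γ) (hiii : δ + (c / δ) * γ ≤ a)
    (hf : Continuous f) (hneg : ∀ x, x ≠ 0 → x * f x < 0) (hodd : ∀ x, f (-x) = -f x)
    (hbd : ∀ x ∈ Icc (0 : ℝ) (2 * a), |f x| ≤ γ) (hfγ : ∀ x ∈ Icc a (2 * a - c), f x = -γ)
    (hfδ : ∀ x ∈ Icc (2 * a) γ, f x = -δ) :
    ∃ (q D : ℝ → ℝ) (τ : ℝ), 2 < τ ∧ (∀ t, HasDerivAt q (D t) t) ∧ q 0 = 0 ∧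
      (∀ t ∈ Ioo 0 τ, 0 < q t) ∧ (∀ t ∈ Icc (-(a / γ)) 0, q t = -q (t + τ)) ∧
      (∀ t ∈ Icc 1 τ, D t = f (q (t - 1))) ∧
      (∀ t ∈ Icc 0 1, D t = -f (q (t - 1 + τ))) := by
  have hb : 0 < a / γ := by positivity
  have hbγ : γ * (a / γ) = a := by field_simp
  have hb4 : 4 * (a / γ) ≤ 1 := by rw [← mul_div_assoc, div_le_one hγ]; exact hγa
  set b := a / γ with hbdef
  have hd : 0 < c / δ := by positivity
  have hdδ : δ * (c / δ) = c := by field_simp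
  have hd1 : c / δ < 1 := by rw [div_lt_one hδ]; exact hcδ
  set d := c / δ with hddef
  have hδa : δ < a := by linarith [mul_pos hd hγ]
  have mulγ : ∀ {u v : ℝ}, u ≤ v → γ * u ≤ γ * v := fun h => mul_le_mul_of_nonneg_left h hγ.le
  have mulδ : ∀ {u v : ℝ}, u ≤ v → δ * u ≤ δ * v := fun h => mul_le_mul_of_nonneg_left h hδ.le
  have hf0 : f 0 = 0 := by have := hodd 0; simp at this; linarith
  have hfnp : ∀ x, 0 ≤ x → f x ≤ 0 := by
    intro x hx
    rcases hx.eq_or_lt with rfl | hx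
    · exact hf0.le
    · by_contra h; push Not at h; nlinarith [hneg x hx.ne']
  have hfnn : ∀ x, x ≤ 0 → 0 ≤ f x := by
    intro x hx
    have := hfnp (-x) (by linarith)
    rw [hodd] at this; linarith
  have hfa : f (-a) = γ := by rw [hodd, hfγ a ⟨le_rfl, by linarith⟩, neg_neg]
  have hf2a : f (2 * a) = -δ := hfδ _ ⟨le_rfl, by linarith⟩
  -- An auxiliary `q₀`, equal to `q` as long as the delayed value has not come back below `2a`;
  -- its height at `1 + 2b` determines the time `s` at which `q` returns to `2a`.
  obtain ⟨q₀, hq₀, hq₀0⟩ := exists_primitive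
    (D := fun t => f (max (-a) (min (γ * (t - 1)) (2 * a)))) (by fun_prop)
  have hM : 2 * a ≤ q₀ (1 + 2 * b) := by
    refine height_ge ha hγ hγa hodd hbd hq₀ hq₀0 ?_ ?_
    · intro t ht
      have h1 : γ * (t - 1) ≤ -a := by linarith [mulγ ht.2]
      rw [min_eq_left (by linarith), max_eq_left h1, hfa]
    · intro t ht
      have h1 : -a ≤ γ * (t - 1) := by linarith [mulγ ht.1]
      have h2 : γ * (t - 1) ≤ 2 * a := by linarith [mulγ ht.2]
      rw [min_eq_left h2, max_eq_right h1]
  obtain ⟨s, hs, hsδ⟩ : ∃ s, 1 + 2 * b ≤ s ∧ δ * (s - (1 + 2 * b)) = q₀ (1 + 2 * b) - 2 * a := by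
    refine ⟨1 + 2 * b + (q₀ (1 + 2 * b) - 2 * a) / δ, ?_, ?_⟩
    · have : 0 ≤ (q₀ (1 + 2 * b) - 2 * a) / δ := div_nonneg (by linarith) hδ.le
      linarith
    · field_simp; ring
  obtain ⟨D, hD⟩ : ∃ D : ℝ → ℝ, ∀ t, D t = f (max (-a) (min (γ * (t - 1))
      (max (2 * a - c) (min (2 * a) (2 * a - δ * (t - 1 - s)))))) := ⟨_, fun _ => rfl⟩
  have hDcont : Continuous D := by rw [funext hD]; fun_prop
  have hwlow : ∀ t, t ≤ s + 1 → max (2 * a - c) (min (2 * a) (2 * a - δ * (t - 1 - s))) = 2 * a := by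
    intro t ht
    have : δ * (t - 1 - s) ≤ 0 := mul_nonpos_of_nonneg_of_nonpos hδ.le (by linarith)
    rw [min_eq_left (by linarith), max_eq_right (by linarith)]
  have hDa : ∀ t, t ≤ 1 - b → D t = γ := by
    intro t ht
    have h1 : γ * (t - 1) ≤ -a := by linarith [mulγ ht]
    rw [hD, hwlow t (by linarith), min_eq_left (by linarith), max_eq_left h1, hfa]
  have hDb : ∀ t ∈ Icc (1 - b) (1 + 2 * b), D t = f (γ * (t - 1)) := by
    intro t ht
    have h1 : -a ≤ γ * (t - 1) := by linarith [mulγ ht.1]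
    have h2 : γ * (t - 1) ≤ 2 * a := by linarith [mulγ ht.2]
    rw [hD, hwlow t (by linarith [ht.2]), min_eq_left h2, max_eq_right h1]
  have hDc : ∀ t ∈ Icc (1 + 2 * b) (s + 1), D t = -δ := by
    intro t ht
    have h2 : 2 * a ≤ γ * (t - 1) := by linarith [mulγ ht.1]
    rw [hD, hwlow t ht.2, min_eq_right h2, max_eq_right (by linarith), hf2a]
  have hDd : ∀ t ∈ Icc (s + 1) (s + d + 1), D t = f (2 * a - δ * (t - 1 - s)) := by
    intro t ht
    have h1 : 2 * a ≤ γ * (t - 1) := by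
      linarith [mulγ (show 2 * b ≤ t - 1 by linarith [ht.1])]
    have h2 : 0 ≤ δ * (t - 1 - s) := mul_nonneg hδ.le (by linarith [ht.1])
    have h3 : δ * (t - 1 - s) ≤ c := by linarith [mulδ ht.2]
    rw [hD, min_eq_right (a := 2 * a) (by linarith), max_eq_right (a := 2 * a - c) (by linarith),
      min_eq_right (by linarith), max_eq_right (by linarith)]
  have hDe : ∀ t, s + d + 1 ≤ t → D t = -γ := by
    intro t ht
    have h1 : 2 * a ≤ γ * (t - 1) := by linarith [mulγ (show 2 * b ≤ t - 1 by linarith)]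
    have h3 : c ≤ δ * (t - 1 - s) := by linarith [mulδ ht]
    rw [hD, min_eq_right (a := 2 * a) (by linarith), max_eq_left (a := 2 * a - c) (by linarith),
      min_eq_right (by linarith), max_eq_right (by linarith),
      hfγ _ ⟨by linarith, le_rfl⟩]
  have hDnn : ∀ t, t ≤ 1 → 0 ≤ D t := by
    intro t ht
    rcases le_total t (1 - b) with h | h
    · rw [hDa t h]; exact hγ.le
    · rw [hDb t ⟨h, by linarith⟩]
      exact hfnn _ (mul_nonpos_of_nonneg_of_nonpos hγ.le (by linarith))
  have hDnp : ∀ t, 1 ≤ t → D t ≤ 0 := by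
    intro t ht
    rw [hD]
    refine hfnp _ (le_max_of_le_right (le_min (mul_nonneg hγ.le (by linarith)) ?_))
    exact le_max_of_le_left (by linarith)
  obtain ⟨q, hq, hq0⟩ := exists_primitive hDcont
  have hanti : ∀ u v, 1 ≤ u → u ≤ v → q v ≤ q u := by
    intro u v hu huv
    have := incr_le hq huv (k := 0) (fun t ht => hDnp t (hu.trans ht.1))
    linarith
  have hqa : ∀ t, t ≤ 1 - b → q t = γ * t := by
    intro t ht
    rcases le_total t 0 with h | h
    · have := incr_eq hq h (k := γ) (fun r hr => hDa r (by linarith [hr.2]))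
      linarith
    · have := incr_eq hq h (k := γ) (fun r hr => hDa r (by linarith [hr.2]))
      linarith
  have hqq₀ : q (1 + 2 * b) = q₀ (1 + 2 * b) := by
    have := incr_eq (q := fun t => q t - q₀ t) (fun t => (hq t).fun_sub (hq₀ t)) (u := 0)
      (v := 1 + 2 * b) (k := 0) (by linarith) (by
        intro t ht
        rw [hD, hwlow t (by linarith [ht.2]), sub_self])
    simp only [hq0, hq₀0] at this
    linarith
  have hqc : ∀ t ∈ Icc (1 + 2 * b) (s + 1), q t = 2 * a - δ * (t - s) := by
    intro t ht
    have := incr_eq hq ht.1 (k := -δ) (fun r hr => hDc r ⟨hr.1, hr.2.trans ht.2⟩)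
    rw [hqq₀] at this
    linarith
  have hqs : q s = 2 * a := by rw [hqc s ⟨hs, by linarith⟩]; ring
  have hqs1 : q (s + 1) = 2 * a - δ := by rw [hqc _ ⟨by linarith, le_rfl⟩]; ring
  have hqsd : q (s + d) = 2 * a - c := by
    rw [hqc _ ⟨by linarith, by linarith⟩]; linarith
  have hqγ : ∀ t ∈ Icc 0 1, q t ≤ γ := by
    intro t ht
    have h := incr_le hq ht.1 (k := γ) (by
      intro r hr
      rcases le_total r (1 - b) with hr1 | hr1
      · exact (hDa r hr1).le
      · have hr2 : r ≤ 1 := hr.2.trans ht.2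
        rw [hDb r ⟨hr1, by linarith⟩, show γ * (r - 1) = -(γ * (1 - r)) by ring, hodd]
        have := (abs_le.1 (hbd (γ * (1 - r))
          ⟨mul_nonneg hγ.le (by linarith), by linarith [mulγ hr1]⟩)).1
        linarith)
    linarith [mulγ ht.2]
  -- the slow phase: the values lie in the plateau where `f = -δ`
  have hslow : ∀ t ∈ Icc (2 * b) s, q t ∈ Icc (2 * a) γ := by
    intro t ht
    rcases le_total t 1 with h | h
    · have h1 := incr_ge hq ht.1 (k := 0) (fun r hr => hDnn r (hr.2.trans h))
      rw [hqa (2 * b) (by linarith)] at h1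
      exact ⟨by linarith, hqγ t ⟨by linarith [ht.1], h⟩⟩
    · have h1 := hanti t s h ht.2
      have h2 := hanti 1 t le_rfl h
      have h3 := hqγ 1 ⟨zero_le_one, le_rfl⟩
      constructor <;> linarith
  obtain ⟨e, he⟩ : ∃ e, e = q (s + d + 1) := ⟨_, rfl⟩
  have hea : a ≤ e := by
    have := incr_ge hq (u := s + 1) (v := s + d + 1) (k := -γ) (by linarith) (by
      intro t ht
      rw [hDd t ht]
      have h2 : 0 ≤ δ * (t - 1 - s) := mul_nonneg hδ.le (by linarith [ht.1])
      have h3 : δ * (t - 1 - s) ≤ c := by linarith [mulδ ht.2]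
      exact (abs_le.1 (hbd _ ⟨by linarith, by linarith⟩)).1)
    linarith
  have he2 : e ≤ 2 * a := by
    have := hanti (s + 1) (s + d + 1) (by linarith) (by linarith)
    linarith
  -- just before the fast descent, the values lie in the plateau where `f = -γ`
  have hfast : ∀ t ∈ Icc (s + d) (s + d + 1), q t ∈ Icc a (2 * a - c) := by
    intro t ht
    have h1 := hanti (s + d) t (by linarith) ht.1
    have h2 := hanti t (s + d + 1) (by linarith [ht.1]) ht.2
    constructor <;> linarith
  obtain ⟨g, hg⟩ : ∃ g, g = e / γ := ⟨_, rfl⟩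
  have hgγ : γ * g = e := by rw [hg]; field_simp
  have hgb : b ≤ g := by rw [hg, hbdef]; gcongr
  have hgb2 : g ≤ 2 * b := by
    rw [hg, hbdef, ← mul_div_assoc]; gcongr
  have hqe : ∀ t, s + d + 1 ≤ t → q t = γ * (s + d + 1 + g - t) := by
    intro t ht
    have := incr_eq hq ht (k := -γ) (fun r hr => hDe r hr.1)
    rw [← he] at this
    linarith
  refine ⟨q, D, s + d + 1 + g, by linarith, hq, hq0, ?_, ?_, ?_, ?_⟩
  · intro t ht
    rcases le_total t (2 * b) with h | h
    · rw [hqa t (by linarith)]; exact mul_pos hγ ht.1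
    rcases le_total t s with h' | h'
    · linarith [(hslow t ⟨h, h'⟩).1]
    rcases le_total t (s + d + 1) with h'' | h''
    · linarith [hanti t (s + d + 1) (by linarith) h'']
    · rw [hqe t h'']; exact mul_pos hγ (by linarith [ht.2])
  · intro t ht
    rw [hqa t (by linarith [ht.2]), hqe _ (by linarith [ht.1])]
    ring
  · intro t ht
    rcases le_total t (1 + 2 * b) with h | h
    · rw [hDb t ⟨by linarith [ht.1], h⟩, hqa (t - 1) (by linarith)]
    rcases le_total t (s + 1) with h' | h'
    · rw [hDc t ⟨h, h'⟩, hfδ _ (hslow (t - 1) ⟨by linarith, by linarith⟩)]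
    rcases le_total t (s + d + 1) with h'' | h''
    · rw [hDd t ⟨h', h''⟩, hqc (t - 1) ⟨by linarith, by linarith⟩]
    · rw [hDe t h'', hfγ _ (hfast (t - 1) ⟨by linarith, by linarith [ht.2]⟩)]
  · intro t ht
    rcases le_total t (1 - b) with h | h
    · rw [hDa t h, hfγ, neg_neg]
      rcases le_total (t - 1 + (s + d + 1 + g)) (s + d + 1) with h' | h'
      · exact hfast _ ⟨by linarith [ht.1], h'⟩
      · have h1 := hanti (s + d) _ (by linarith) (le_trans (by linarith) h')
        rw [hqsd] at h1
        refine ⟨?_, h1⟩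
        rw [hqe _ h']
        linarith [mulγ h]
    · rw [hDb t ⟨h, by linarith [ht.2]⟩, hqe _ (by linarith), ← hodd]
      congr 1
      ring

theorem statement_10 (f : ℝ → ℝ) (a c δ γ : ℝ)
    (ha : 0 < a) (hc : 0 < c) (hδ : 0 < δ) (hγ : 0 < γ)
    (hi : c < min a δ) (hii : 4 * a ≤ γ ∧ δ < γ) (hiii : δ + (c / δ) * γ ≤ a)
    (hH : HypH f) (hH'' : HypH'' f a c δ γ) :
    ∃ (p : ℝ → ℝ) (z z' z'' : ℝ), IsSOP f p ∧
      z < z' ∧ z' < z'' ∧ p z = 0 ∧ p z' = 0 ∧ p z'' = 0 ∧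
      (∀ t, t ∈ Ioo z z' ∪ Ioo z' z'' → p t ≠ 0) ∧
      MinPeriod p (z'' - z) ∧ 4 < z'' - z := by
  obtain ⟨hodd, hbd, hfγ, hfδ⟩ := hH''
  obtain ⟨q, D, τ, hτ, hq, hq0, hpos, hglue, hD1, hD0⟩ := exists_bump ha hc hδ hγ
    (lt_min_iff.1 hi).2 hii.1 hiii hH.1 hH.2.1 hodd hbd hfγ hfδ
  have hb : a / γ < 1 := by rw [div_lt_one hγ]; linarith [hii.1]
  exact sop_of_bump hodd hτ (div_pos ha hγ) (by linarith) hq hq0 hpos hglue hD1 hD0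
end

section
/- Given reals a, c, δ, γ > 0 satisfying (i) c < min(a, δ), (ii) γ ≥ 4a and γ > δ, (iii) δ + (c/δ)·γ ≤ a, suppose f satisfies (H) and (H''). Then the equation x'(t) = f(x(t-1)) has an SOP solution whose minimal period is strictly greater than 4 + 2c/δ + 6a/γ + 2(γ - 4a)/δ. -/
/-!
The half-period of the solution is computed explicitly. Start on `[0,1]` from the segment
`t ↦ a - γ t` and follow the delay equation forward.

* On `[1, b]` with `b = 1 + 3a/γ` the delayed argument sweeps from `a` to `-2a` at speed `γ`.
  Oddness of `f` cancels the contribution of `[-a, a]`, so the solution stays in `[-γ, -2a]` and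
  `x b < 2a - γ`; strictness comes from `f (-2a) = δ < γ`.
* As long as the delayed argument lies in `[-γ, -2a]` the slope is exactly `δ`; hence `x` climbs
  linearly to `-2a`, reached at `t₃ > b + (γ - 4a)/δ`, and for one more unit of time, up to
  `-2a + δ`.
* On `[t₃ + 1, e]`, `e = t₃ + 1 + c/δ`, the slope is between `0` and `γ`, and
  `δ + (c / δ) γ ≤ a` ensures that `x` is still at most `-a` at time `e`.
* From then on the delayed argument lies in `[-2a + c, -a]`, where `f = γ`. The solution reaches
  `-a` at some time `τ ≥ e` and then has slope `γ` for one unit of time, so on `[τ, τ + 1]` it is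
  exactly the negative of the initial segment.

Forward uniqueness and oddness give `x (t + τ) = -x t` for `t ≥ 0`, and this antiperiodicity
extends `x` to a solution `p` on `ℝ` (`key_solution`, `antiperiodic_extension`). The only zero of
`p` in `[0, τ]` is `a / γ`, so all zeros are `a / γ + k τ`; therefore `p` is slowly oscillating
and its minimal period is `2 τ`.
-/

open Set Filter

/-! ### Forward solutions and derivative bounds -/

/-- Iterates of the method of steps for `x' (t) = f (x (t - 1))`, `t ≥ 1`, with initial data `φ`
on `(-∞, 1]`. The `n`-th iterate is correct on `(-∞, n + 1]`. -/
noncomputable def stepIter (f φ : ℝ → ℝ) : ℕ → ℝ → ℝ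
  | 0 => fun t => φ (min t 1)
  | n + 1 => fun t => φ (min t 1) + ∫ s in (1 : ℝ)..(max t 1), f (stepIter f φ n (s - 1))

lemma stepIter_continuous {f φ : ℝ → ℝ} (hf : Continuous f) (hφ : Continuous φ) (n : ℕ) :
    Continuous (stepIter f φ n) := by
  induction n with
  | zero => simp only [stepIter]; fun_prop
  | succ n ih =>
    simp only [stepIter]
    have h1 : Continuous fun s => f (stepIter f φ n (s - 1)) := by fun_prop
    have h2 : Continuous fun t : ℝ => ∫ s in (1 : ℝ)..t, f (stepIter f φ n (s - 1)) :=
      intervalIntegral.continuous_primitive (fun _ _ => h1.intervalIntegrable _ _) 1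
    have h3 : Continuous fun t : ℝ => max t 1 := by fun_prop
    exact (by fun_prop : Continuous fun t : ℝ => φ (min t 1)).add (h2.comp h3)

lemma stepIter_succ_eq {f φ : ℝ → ℝ} (n : ℕ) :
    ∀ t : ℝ, t ≤ n + 1 → stepIter f φ (n + 1) t = stepIter f φ n t := by
  induction n with
  | zero =>
    intro t ht
    have : max t 1 = 1 := max_eq_right (by simpa using ht)
    simp [stepIter, this]
  | succ n ih =>
    intro t ht
    push_cast at ht
    change φ (min t 1) + (∫ s in (1 : ℝ)..(max t 1), f (stepIter f φ (n + 1) (s - 1))) =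
      φ (min t 1) + ∫ s in (1 : ℝ)..(max t 1), f (stepIter f φ n (s - 1))
    congr 1
    apply intervalIntegral.integral_congr
    intro s hs
    rw [uIcc_of_le (le_max_right _ _)] at hs
    have h2 : s ≤ n + 2 := hs.2.trans (max_le (by linarith) (by
      have := n.cast_nonneg (α := ℝ); linarith))
    simp only
    rw [ih _ (by linarith)]

lemma stepIter_eq_of_le {f φ : ℝ → ℝ} {n m : ℕ} (hnm : n ≤ m) {t : ℝ} (ht : t ≤ n + 1) :
    stepIter f φ m t = stepIter f φ n t := by
  induction m, hnm using Nat.le_induction with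
  | base => rfl
  | succ m hm ih =>
    have : (n : ℝ) ≤ m := by exact_mod_cast hm
    rw [stepIter_succ_eq m t (by linarith), ih]

lemma exists_forward {f φ : ℝ → ℝ} (hf : Continuous f) (hφ : Continuous φ) :
    ∃ x : ℝ → ℝ, Continuous x ∧ (∀ t ≤ 1, x t = φ t) ∧
      ∀ t, 1 < t → HasDerivAt x (f (x (t - 1))) t := by
  set x : ℝ → ℝ := fun t => stepIter f φ ⌈t⌉₊ t with hx
  have hxn : ∀ (n : ℕ) (t : ℝ), t ≤ n → x t = stepIter f φ n t := by
    intro n t ht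
    have h1 : ⌈t⌉₊ ≤ n := Nat.ceil_le.2 ht
    have h2 := Nat.le_ceil t
    exact (stepIter_eq_of_le h1 (by linarith)).symm
  have hloc : ∀ t : ℝ, ∃ n : ℕ, t < n ∧ x =ᶠ[nhds t] stepIter f φ (n + 1) := by
    intro t
    obtain ⟨n, hn⟩ := exists_nat_gt t
    refine ⟨n, hn, ?_⟩
    filter_upwards [Iio_mem_nhds hn] with s hs
    exact hxn (n + 1) s (by push_cast; linarith [show s < n from hs])
  refine ⟨x, ?_, ?_, ?_⟩
  · rw [continuous_iff_continuousAt]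
    intro t
    obtain ⟨n, -, h⟩ := hloc t
    exact ((stepIter_continuous hf hφ (n + 1)).continuousAt).congr h.symm
  · intro t ht
    rw [hxn 1 t (by simpa using ht)]
    simp [stepIter, ht]
  · intro t ht
    obtain ⟨n, hn, h⟩ := hloc t
    have hc : Continuous fun s => f (stepIter f φ n (s - 1)) := by
      have := stepIter_continuous hf hφ n
      fun_prop
    have hd : HasDerivAt (fun u => φ 1 + ∫ s in (1 : ℝ)..u, f (stepIter f φ n (s - 1)))
        (f (stepIter f φ n (t - 1))) t :=
      (intervalIntegral.integral_hasDerivAt_right (hc.intervalIntegrable _ _)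
        hc.stronglyMeasurable.stronglyMeasurableAtFilter hc.continuousAt).const_add _
    rw [hxn n (t - 1) (by linarith)]
    refine hd.congr_of_eventuallyEq ?_
    filter_upwards [h, Ioi_mem_nhds ht] with s hs hs1
    have hs1 : (1 : ℝ) < s := hs1
    rw [hs]
    simp only [stepIter]
    rw [min_eq_right hs1.le, max_eq_left hs1.le]

lemma sub_le_of_deriv_le {x g : ℝ → ℝ} (hc : Continuous x)
    (hd : ∀ t, 1 < t → HasDerivAt x (g t) t) {s t M : ℝ} (hs : 1 ≤ s) (hst : s ≤ t)
    (hM : ∀ u, s < u → u < t → g u ≤ M) : x t - x s ≤ M * (t - s) := by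
  refine (convex_Icc s t).image_sub_le_mul_sub_of_deriv_le hc.continuousOn ?_ ?_ s
    (left_mem_Icc.2 hst) t (right_mem_Icc.2 hst) hst
  · intro u hu
    rw [interior_Icc] at hu
    exact (hd u (by linarith [hu.1])).differentiableAt.differentiableWithinAt
  · intro u hu
    rw [interior_Icc] at hu
    rw [(hd u (by linarith [hu.1])).deriv]
    exact hM u hu.1 hu.2

lemma le_sub_of_le_deriv {x g : ℝ → ℝ} (hc : Continuous x)
    (hd : ∀ t, 1 < t → HasDerivAt x (g t) t) {s t m : ℝ} (hs : 1 ≤ s) (hst : s ≤ t)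
    (hm : ∀ u, s < u → u < t → m ≤ g u) : m * (t - s) ≤ x t - x s := by
  have := sub_le_of_deriv_le (x := fun t => -x t) (g := fun t => -g t) (M := -m) hc.neg
    (fun t ht => (hd t ht).neg) hs hst (fun u h1 h2 => neg_le_neg (hm u h1 h2))
  linarith

lemma sub_eq_of_deriv_eq {x g : ℝ → ℝ} (hc : Continuous x)
    (hd : ∀ t, 1 < t → HasDerivAt x (g t) t) {s t m : ℝ} (hs : 1 ≤ s) (hst : s ≤ t)
    (hm : ∀ u, s < u → u < t → g u = m) : x t = x s + m * (t - s) := by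
  have h1 := le_sub_of_le_deriv hc hd hs hst (fun u h1 h2 => (hm u h1 h2).ge)
  have h2 := sub_le_of_deriv_le hc hd hs hst (fun u h1 h2 => (hm u h1 h2).le)
  linarith

/-- Forward uniqueness: a solution that flips its initial segment on `[0, 1]` after time `τ` is
antiperiodic on `[0, ∞)`, because `f` is odd. -/
lemma antiperiodic_of_segment {f x : ℝ → ℝ} (hodd : ∀ y, f (-y) = -f y) (hc : Continuous x)
    (hd : ∀ t, 1 < t → HasDerivAt x (f (x (t - 1))) t) {τ : ℝ} (hτ : 0 < τ)
    (h01 : ∀ t, 0 ≤ t → t ≤ 1 → x (t + τ) = -x t) : ∀ t, 0 ≤ t → x (t + τ) = -x t := by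
  have key : ∀ n : ℕ, ∀ t : ℝ, 0 ≤ t → t ≤ n + 1 → x (t + τ) = -x t := by
    intro n
    induction n with
    | zero => intro t h0 h1; exact h01 t h0 (by simpa using h1)
    | succ n ih =>
      intro t h0 h1
      push_cast at h1
      rcases le_total t 1 with h | h
      · exact h01 t h0 h
      have := sub_eq_of_deriv_eq (x := fun t => x (t + τ) + x t)
        (g := fun t => f (x (t + τ - 1)) + f (x (t - 1))) (m := 0) (by fun_prop)
        (fun t ht => ((hd (t + τ) (by linarith)).comp_add_const t τ).add (hd t ht)) le_rfl h
        (fun u hu1 hu2 => by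
          have e := ih (u - 1) (by linarith) (by linarith)
          rw [show u + τ - 1 = u - 1 + τ by ring, e, hodd]; ring)
      have e1 := h01 1 zero_le_one le_rfl
      linarith
  intro t ht
  obtain ⟨n, hn⟩ := exists_nat_gt t
  exact key n t ht (by linarith)

/-! ### The half-period -/

set_option maxHeartbeats 1000000 in
/-- The forward solution started from `t ↦ a - γ t` on `[0, 1]`, its half-period `τ` with the lower
bound, and the location of its only possible zero in `[0, τ]`. -/
lemma key_solution (f : ℝ → ℝ) (a c δ γ : ℝ)
    (ha : 0 < a) (hc : 0 < c) (hδ : 0 < δ) (hγ : 0 < γ)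
    (hi : c < min a δ) (hii : 4 * a ≤ γ ∧ δ < γ) (hiii : δ + (c / δ) * γ ≤ a)
    (hH : HypH f) (hH'' : HypH'' f a c δ γ) :
    ∃ (x : ℝ → ℝ) (τ : ℝ), 2 + c / δ + 3 * a / γ + (γ - 4 * a) / δ < τ ∧
      (∀ t, 1 < t → HasDerivAt x (f (x (t - 1))) t) ∧ (∀ t, 0 ≤ t → x (t + τ) = -x t) ∧
      x 0 = a ∧ ∀ t, 0 ≤ t → t ≤ τ → x t = 0 → t = a / γ := by
  obtain ⟨hfc, hneg, -, -⟩ := hH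
  obtain ⟨hodd, hbd, hfγ, hfδ⟩ := hH''
  obtain ⟨h4a, hδγ⟩ := hii
  have hca : c < a := lt_of_lt_of_le hi (min_le_left _ _)
  have hcδ : c < δ := lt_of_lt_of_le hi (min_le_right _ _)
  have hq0 : 0 < c / δ := by positivity
  have hq1 : c / δ < 1 := (div_lt_one hδ).2 hcδ
  have hqδ : δ * (c / δ) = c := by field_simp
  have hδa : δ < a := by nlinarith
  have f0 : f 0 = 0 := by have := hodd 0; simp at this; linarith
  have hfpos : ∀ y, y ≤ 0 → 0 ≤ f y := by
    intro y hy
    rcases hy.eq_or_lt with rfl | h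
    · exact f0.ge
    · have := hneg y h.ne; nlinarith
  have hfnonpos : ∀ y, 0 ≤ y → f y ≤ 0 := by
    intro y hy
    have := hfpos (-y) (by linarith)
    rw [hodd] at this; linarith
  have hfle : ∀ y, -(2 * a) ≤ y → y ≤ 0 → f y ≤ γ := by
    intro y h1 h2
    have := (abs_le.1 (hbd (-y) ⟨by linarith, by linarith⟩)).1
    rw [hodd] at this; linarith
  have hfge : ∀ y, 0 ≤ y → y ≤ 2 * a → -γ ≤ f y :=
    fun y h1 h2 => (abs_le.1 (hbd y ⟨h1, h2⟩)).1
  have hfδ' : ∀ y, -γ ≤ y → y ≤ -(2 * a) → f y = δ := by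
    intro y h1 h2
    have := hfδ (-y) ⟨by linarith, by linarith⟩
    rw [hodd] at this; linarith
  have hfγ' : ∀ y, -(2 * a) + c ≤ y → y ≤ -a → f y = γ := by
    intro y h1 h2
    have := hfγ (-y) ⟨by linarith, by linarith⟩
    rw [hodd] at this; linarith
  obtain ⟨x, hxc, hx1, hxd⟩ := exists_forward (φ := fun t => a - γ * t) hfc (by fun_prop)
  -- `r` is the time needed to travel the distance `a` at speed `γ`.
  obtain ⟨r, hr⟩ : ∃ r, r = a / γ := ⟨_, rfl⟩
  have hrγ : γ * r = a := by rw [hr]; field_simp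
  have hr0 : 0 < r := by rw [hr]; positivity
  have hr3 : 3 * r < 1 := by nlinarith
  have hx1v : x 1 = a - γ := by rw [hx1 1 le_rfl]; ring
  obtain ⟨b, hb⟩ : ∃ b, b = 1 + 3 * r := ⟨_, rfl⟩
  -- While `t ≤ b` the delayed value is on the initial segment.
  have hdel : ∀ u, u ≤ b → x (u - 1) = a - γ * (u - 1) := fun u hu => hx1 _ (by linarith)
  have hA : ∀ t, 1 ≤ t → t ≤ 1 + r → -γ ≤ x t ∧ x t ≤ a - γ := by
    intro t h1 h2
    have l := le_sub_of_le_deriv (m := -γ) hxc hxd le_rfl h1 (fun u hu1 hu2 => by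
      rw [hdel u (by linarith)]; exact hfge _ (by nlinarith) (by nlinarith))
    have m := sub_le_of_deriv_le (M := 0) hxc hxd le_rfl h1 (fun u hu1 hu2 => by
      rw [hdel u (by linarith)]; exact hfnonpos _ (by nlinarith))
    constructor <;> nlinarith
  have hBmono : ∀ s t, 1 + r ≤ s → s ≤ t → t ≤ b → x s ≤ x t := by
    intro s t h1 h2 h3
    have l := le_sub_of_le_deriv (m := 0) hxc hxd (by linarith) h2 (fun u hu1 hu2 => by
      rw [hdel u (by linarith)]; exact hfpos _ (by nlinarith))
    linarith
  -- Reflection of time about `1 + r`, where the delayed argument vanishes.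
  have hsym : x (1 + 2 * r) = a - γ := by
    have hd : ∀ v, 1 < v → v < 1 + r →
        HasDerivAt (fun v => x (v + r) - x (2 + r - v)) 0 v := by
      intro v h1 h2
      have d := ((hxd (v + r) (by linarith)).comp_add_const v r).sub
        ((hxd (2 + r - v) (by linarith)).comp_const_sub (2 + r) v)
      rw [hdel (v + r) (by linarith), hdel (2 + r - v) (by linarith),
        show a - γ * (v + r - 1) = -(a - γ * (2 + r - v - 1)) by linarith, hodd] at d
      rw [sub_self] at d
      exact d
    obtain ⟨u, hu, hu'⟩ := exists_hasDerivAt_eq_slope (fun v => x (v + r) - x (2 + r - v))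
      (fun _ => 0) (show (1 : ℝ) < 1 + r by linarith) (by fun_prop)
      (fun v hv => hd v hv.1 hv.2)
    rw [eq_comm, div_eq_zero_iff] at hu'
    ring_nf at hu' hx1v ⊢
    rcases hu' with h | h <;> linarith
  have hxb : x b < 2 * a - γ := by
    have hev : ∀ᶠ u in nhds b, f (a - γ * (u - 1)) < γ := by
      have hcont : Continuous fun u => f (a - γ * (u - 1)) := by fun_prop
      refine hcont.continuousAt.eventually_lt continuousAt_const ?_
      rw [hfδ' _ (by nlinarith) (by nlinarith)]; exact hδγ
    obtain ⟨l, hl, hlu⟩ := exists_Ioc_subset_of_mem_nhds hev ⟨1, by linarith⟩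
    obtain ⟨s, hs⟩ : ∃ s, s = max l (1 + 2 * r) := ⟨_, rfl⟩
    have hs1 : 1 + 2 * r ≤ s := hs ▸ le_max_right _ _
    have hs2 : l ≤ s := hs ▸ le_max_left _ _
    have hsb : s < b := hs ▸ max_lt hl (by linarith)
    have e1 := sub_le_of_deriv_le (M := γ) hxc hxd (by linarith) hs1 (fun u hu1 hu2 => by
      rw [hdel u (by linarith)]; exact hfle _ (by nlinarith) (by nlinarith))
    obtain ⟨u, hu, hu'⟩ := exists_hasDerivAt_eq_slope x (fun u => f (x (u - 1))) hsb
      hxc.continuousOn (fun u hu => hxd u (by linarith [hu.1]))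
    have e2 : f (a - γ * (u - 1)) < γ := hlu ⟨by linarith [hu.1], hu.2.le⟩
    rw [hdel u hu.2.le] at hu'
    rw [hu', div_lt_iff₀ (by linarith)] at e2
    nlinarith
  have hlow : ∀ t, 3 * r ≤ t → t ≤ b → -γ ≤ x t ∧ x t ≤ -(2 * a) := by
    intro t h1 h2
    rcases le_total t 1 with h | h
    · rw [hx1 t h]; constructor <;> nlinarith
    rcases le_total t (1 + r) with h' | h'
    · have := hA t h h'
      constructor <;> linarith
    · have := hBmono t b h' h2 le_rfl
      have := hBmono (1 + r) t le_rfl h' h2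
      have := hA (1 + r) (by linarith) le_rfl
      constructor <;> linarith
  -- The slow climb to `-2a`.
  obtain ⟨t₃, ht₃⟩ : ∃ t₃, t₃ = b + (-(2 * a) - x b) / δ := ⟨_, rfl⟩
  have ht₃δ : δ * (t₃ - b) = -(2 * a) - x b := by rw [ht₃]; field_simp; ring
  have hbt₃ : b < t₃ := by nlinarith
  have ht₃low : b + (γ - 4 * a) / δ < t₃ := by
    have : (γ - 4 * a) / δ < (-(2 * a) - x b) / δ := div_lt_div_of_pos_right (by linarith) hδ
    linarith
  have hclimb : ∀ n : ℕ, ∀ t, b ≤ t → t ≤ t₃ → t ≤ b + n → x t = x b + δ * (t - b) := by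
    intro n
    induction n with
    | zero =>
      intro t h1 _ h3
      have : t = b := le_antisymm (by simpa using h3) h1
      simp [this]
    | succ n ih =>
      intro t h1 h2 h3
      push_cast at h3
      refine sub_eq_of_deriv_eq hxc hxd (by linarith) h1 (fun u hu1 hu2 => ?_)
      rcases le_total (u - 1) b with h | h
      · obtain ⟨p1, p2⟩ := hlow (u - 1) (by linarith) h
        exact hfδ' _ p1 p2
      · have e := ih (u - 1) h (by linarith) (by linarith)
        have := (hlow b (by linarith) le_rfl).1
        have q1 : 0 ≤ δ * (u - 1 - b) := mul_nonneg hδ.le (by linarith)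
        have q2 : 0 ≤ δ * (t₃ - (u - 1)) := mul_nonneg hδ.le (by linarith)
        exact hfδ' _ (by linarith) (by linarith)
  have hrange : ∀ t, 3 * r ≤ t → t ≤ t₃ → -γ ≤ x t ∧ x t ≤ -(2 * a) := by
    intro t h1 h2
    rcases le_total t b with h | h
    · exact hlow t h1 h
    · obtain ⟨n, hn⟩ := exists_nat_gt (t - b)
      have e := hclimb n t h h2 (by linarith)
      have := (hlow b (by linarith) le_rfl).1
      have q1 : 0 ≤ δ * (t - b) := mul_nonneg hδ.le (by linarith)
      have q2 : 0 ≤ δ * (t₃ - t) := mul_nonneg hδ.le (by linarith)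
      constructor <;> linarith
  have hxt₃ : x t₃ = -(2 * a) := by
    obtain ⟨n, hn⟩ := exists_nat_gt (t₃ - b)
    have e := hclimb n t₃ hbt₃.le le_rfl (by linarith)
    linarith
  have hC : ∀ t, t₃ ≤ t → t ≤ t₃ + 1 → x t = -(2 * a) + δ * (t - t₃) := by
    intro t h1 h2
    rw [← hxt₃]
    refine sub_eq_of_deriv_eq hxc hxd (by linarith) h1 (fun u hu1 hu2 => ?_)
    obtain ⟨p1, p2⟩ := hrange (u - 1) (by linarith) (by linarith)
    exact hfδ' _ p1 p2
  -- The delayed argument crosses `[-2a, -2a + c]`.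
  obtain ⟨e, he⟩ : ∃ e, e = t₃ + 1 + c / δ := ⟨_, rfl⟩
  have hxt₃1 : x (t₃ + 1) = -(2 * a) + δ := by
    rw [hC (t₃ + 1) (by linarith) le_rfl]; ring
  have hD : ∀ t, t₃ + 1 ≤ t → t ≤ e → -(2 * a) + δ ≤ x t ∧ x t ≤ -a := by
    intro t h1 h2
    have hr' : ∀ u, t₃ + 1 < u → u < t → -(2 * a) ≤ x (u - 1) ∧ x (u - 1) ≤ 0 := by
      intro u hu1 hu2
      rw [hC (u - 1) (by linarith) (by linarith)]
      constructor <;> nlinarith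
    have l := le_sub_of_le_deriv (m := 0) hxc hxd (by linarith) h1 (fun u hu1 hu2 =>
      hfpos _ (hr' u hu1 hu2).2)
    have m := sub_le_of_deriv_le (M := γ) hxc hxd (by linarith) h1 (fun u hu1 hu2 =>
      hfle _ (hr' u hu1 hu2).1 (hr' u hu1 hu2).2)
    constructor <;> nlinarith
  have hE : ∀ t, t₃ + c / δ ≤ t → t ≤ e → -(2 * a) + c ≤ x t ∧ x t ≤ -a := by
    intro t h1 h2
    rcases le_total t (t₃ + 1) with h | h
    · rw [hC t (by linarith) h]
      constructor <;> nlinarith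
    · have := hD t h h2
      constructor <;> linarith
  -- The fast climb through `-a`.
  obtain ⟨τ, hτ⟩ : ∃ τ, τ = e + (-a - x e) / γ := ⟨_, rfl⟩
  have hτγ : γ * (τ - e) = -a - x e := by rw [hτ]; field_simp; ring
  have hxe := hD e (by linarith) le_rfl
  have heτ : e ≤ τ := by nlinarith
  have hτe : τ ≤ e + 1 := by nlinarith
  have hF : ∀ t, e ≤ t → t ≤ τ → x t = x e + γ * (t - e) := by
    intro t h1 h2
    refine sub_eq_of_deriv_eq hxc hxd (by linarith) h1 (fun u hu1 hu2 => ?_)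
    obtain ⟨p1, p2⟩ := hE (u - 1) (by linarith) (by linarith)
    exact hfγ' _ p1 p2
  have hxτ : x τ = -a := by rw [hF τ heτ le_rfl]; linarith
  have hG : ∀ t, t₃ + c / δ ≤ t → t ≤ τ → -(2 * a) + c ≤ x t ∧ x t ≤ -a := by
    intro t h1 h2
    rcases le_total t e with h | h
    · exact hE t h1 h
    · rw [hF t h h2]
      constructor <;> nlinarith
  have hlast : ∀ t, τ ≤ t → t ≤ τ + 1 → x t = -a + γ * (t - τ) := by
    intro t h1 h2
    rw [← hxτ]
    refine sub_eq_of_deriv_eq hxc hxd (by linarith) h1 (fun u hu1 hu2 => ?_)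
    obtain ⟨p1, p2⟩ := hG (u - 1) (by linarith) (by linarith)
    exact hfγ' _ p1 p2
  refine ⟨x, τ, ?_, hxd, ?_, ?_, ?_⟩
  · have : 3 * a / γ = 3 * r := by rw [hr]; ring
    linarith
  · refine antiperiodic_of_segment hodd hxc hxd (by linarith) (fun t h0 h1 => ?_)
    rw [hlast (t + τ) (by linarith) (by linarith), hx1 t h1]; ring
  · rw [hx1 0 zero_le_one]; ring
  · intro t h0 h1 hz
    rw [← hr]
    rcases le_total t 1 with h | h
    · rw [hx1 t h] at hz
      have : γ * (t - r) = 0 := by linarith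
      rcases mul_eq_zero.1 this with h' | h' <;> linarith
    exfalso
    rcases le_total t t₃ with h' | h'
    · have := (hrange t (by linarith) h').2
      linarith
    rcases le_total t (t₃ + 1) with h'' | h''
    · rw [hC t h' h''] at hz
      nlinarith
    · have := (hG t (by linarith) h1).2
      linarith

/-! ### Extension to the whole line -/

/-- A forward solution with `x (t + τ) = -x t` for `t ≥ 0` extends to an antiperiodic solution on
`ℝ`: near `t`, put `p = (-1) ^ n * x (· + n τ)` for any `n` with `t + n τ ≥ 0`. -/
lemma antiperiodic_extension {f x : ℝ → ℝ} {τ : ℝ} (hτ : 1 < τ) (hodd : ∀ y, f (-y) = -f y)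
    (hxd : ∀ t, 1 < t → HasDerivAt x (f (x (t - 1))) t)
    (hanti : ∀ t, 0 ≤ t → x (t + τ) = -x t) :
    ∃ p : ℝ → ℝ, (∀ t, HasDerivAt p (f (p (t - 1))) t) ∧ (∀ t, p (t + τ) = -p t) ∧
      ∀ t, 0 ≤ t → p t = x t := by
  have hstep : ∀ (k : ℕ) (t : ℝ), 0 ≤ t → x (t + k * τ) = (-1) ^ k * x t := by
    intro k
    induction k with
    | zero => intro t _; simp
    | succ k ih =>
      intro t ht
      have : (0 : ℝ) ≤ k * τ := by positivity
      rw [show t + ((k + 1 : ℕ) : ℝ) * τ = t + k * τ + τ by push_cast; ring,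
        hanti _ (by linarith), ih t ht]
      ring
  have hsq : ∀ n : ℕ, ((-1 : ℝ) ^ n) * (-1) ^ n = 1 := fun n => by
    rw [← mul_pow]; norm_num
  have hind : ∀ (n m : ℕ) (t : ℝ), n ≤ m → 0 ≤ t + n * τ →
      (-1) ^ m * x (t + m * τ) = (-1) ^ n * x (t + n * τ) := by
    intro n m t hnm ht
    obtain ⟨k, rfl⟩ := Nat.exists_eq_add_of_le hnm
    rw [show t + ((n + k : ℕ) : ℝ) * τ = t + n * τ + k * τ by push_cast; ring, hstep k _ ht,
      pow_add]
    linear_combination ((-1) ^ n * x (t + n * τ)) * hsq k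
  have hN : ∀ t : ℝ, 0 ≤ t + (⌈|t|⌉₊ : ℝ) * τ := by
    intro t
    have h1 := Nat.le_ceil |t|
    have h2 := neg_abs_le t
    have h3 := abs_nonneg t
    nlinarith
  obtain ⟨p, hp⟩ : ∃ p : ℝ → ℝ, ∀ t, p t = (-1) ^ ⌈|t|⌉₊ * x (t + (⌈|t|⌉₊ : ℝ) * τ) :=
    ⟨_, fun _ => rfl⟩
  have hpn : ∀ (n : ℕ) (t : ℝ), 0 ≤ t + n * τ → p t = (-1) ^ n * x (t + n * τ) := by
    intro n t ht
    rw [hp]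
    rcases le_total n ⌈|t|⌉₊ with h | h
    · exact hind _ _ t h ht
    · exact (hind _ _ t h (hN t)).symm
  refine ⟨p, fun t => ?_, fun t => ?_, fun t ht => ?_⟩
  · obtain ⟨n, hn⟩ := exists_nat_gt (1 + |t|)
    have h1 : 1 < t + n * τ := by
      have h2 := neg_abs_le t
      have h3 := abs_nonneg t
      nlinarith
    have hd := ((hxd _ h1).comp_add_const t (n * τ)).const_mul ((-1) ^ n)
    have hval : f (p (t - 1)) = (-1) ^ n * f (x (t + n * τ - 1)) := by
      rw [hpn n (t - 1) (by linarith), show t - 1 + n * τ = t + n * τ - 1 by ring]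
      rcases neg_one_pow_eq_or ℝ n with h | h <;> simp [h, hodd]
    rw [hval]
    refine hd.congr_of_eventuallyEq ?_
    filter_upwards [Ioi_mem_nhds (show t - 1 < t by linarith)] with s hs
    exact hpn n s (by linarith [show t - 1 < s from hs])
  · have h := hN t
    rw [hpn _ (t + τ) (by linarith), hp t, show t + τ + (⌈|t|⌉₊ : ℝ) * τ =
      t + (⌈|t|⌉₊ : ℝ) * τ + τ by ring, hanti _ h]
    ring
  · have := hpn 0 t (by simpa using ht)
    simpa using this

theorem statement_11 (f : ℝ → ℝ) (a c δ γ : ℝ)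
    (ha : 0 < a) (hc : 0 < c) (hδ : 0 < δ) (hγ : 0 < γ)
    (hi : c < min a δ) (hii : 4 * a ≤ γ ∧ δ < γ) (hiii : δ + (c / δ) * γ ≤ a)
    (hH : HypH f) (hH'' : HypH'' f a c δ γ) :
    ∃ (p : ℝ → ℝ) (T : ℝ), IsSOP f p ∧ MinPeriod p T ∧
      4 + 2 * c / δ + 6 * a / γ + 2 * (γ - 4 * a) / δ < T := by
  obtain ⟨x, τ, hτ, hxd, hanti, hx0, hxz⟩ :=
    key_solution f a c δ γ ha hc hδ hγ hi hii hiii hH hH''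
  have hτ1 : 1 < τ := by
    have h1 : 0 < c / δ := by positivity
    have h2 : 0 < 3 * a / γ := by positivity
    have h3 : 0 ≤ (γ - 4 * a) / δ := div_nonneg (by linarith [hii.1]) hδ.le
    linarith
  obtain ⟨p, hpd, hpa, hpx⟩ := antiperiodic_extension hτ1 hH''.1 hxd hanti
  have hp0 : p 0 = a := by rw [hpx 0 le_rfl, hx0]
  have hpk : ∀ (k : ℤ) (t : ℝ), p t = 0 → p (t + k * τ) = 0 := by
    intro k
    induction k using Int.induction_on with
    | zero => intro t ht; simpa using ht
    | succ k ih =>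
      intro t ht
      rw [show t + (((k : ℤ) + 1 : ℤ) : ℝ) * τ = t + ((k : ℤ) : ℝ) * τ + τ by push_cast; ring,
        hpa, ih t ht, neg_zero]
    | pred k ih =>
      intro t ht
      have h := hpa (t + ((-(k : ℤ) - 1 : ℤ) : ℝ) * τ)
      rw [show t + ((-(k : ℤ) - 1 : ℤ) : ℝ) * τ + τ = t + ((-(k : ℤ) : ℤ) : ℝ) * τ by
        push_cast; ring, ih t ht] at h
      linarith
  have hzero : ∀ z, p z = 0 → ∃ k : ℤ, z = a / γ + k * τ := by
    intro z hz
    refine ⟨⌊z / τ⌋, ?_⟩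
    have h1 := (le_div_iff₀ (by linarith)).1 (Int.floor_le (z / τ))
    have h2 := (div_lt_iff₀ (by linarith)).1 (Int.lt_floor_add_one (z / τ))
    have h3 := hpk (-⌊z / τ⌋) z hz
    push_cast at h3
    rw [hpx _ (by linarith)] at h3
    have := hxz _ (by linarith) (by linarith) h3
    linarith
  have hper : ∀ t, p (t + 2 * τ) = p t := by
    intro t
    rw [show t + 2 * τ = t + τ + τ by ring, hpa, hpa, neg_neg]
  have hpz : p (a / γ) = 0 := by
    -- `p` changes sign between `0` and `τ`, and `a / γ` is the only candidate for a zero there.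
    have hcont : Continuous p :=
      continuous_iff_continuousAt.2 fun t => (hpd t).continuousAt
    have hpτ : p τ = -a := by have := hpa 0; rwa [zero_add, hp0] at this
    obtain ⟨z, hz, hz0⟩ := intermediate_value_Icc' (by linarith : (0 : ℝ) ≤ τ)
      hcont.continuousOn (show (0 : ℝ) ∈ Icc (p τ) (p 0) by
        rw [hpτ, hp0]; constructor <;> linarith)
    have := hxz z hz.1 hz.2 (by rw [← hpx z hz.1, hz0])
    rw [← this, hz0]
  refine ⟨p, 2 * τ, ⟨hpd, ⟨2 * τ, by linarith, hper⟩, ⟨0, a / γ, ?_⟩, ?_⟩,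
    ⟨by linarith, hper, ?_⟩, ?_⟩
  · rw [hp0, hpz]; exact ha.ne'
  · intro z z' hz hz' hne
    obtain ⟨k, hk⟩ := hzero z hz
    obtain ⟨l, hl⟩ := hzero z' hz'
    have hkl : k - l ≠ 0 := by
      intro h
      exact hne (by rw [hk, hl, sub_eq_zero.1 h])
    have h1 : (1 : ℝ) ≤ |((k - l : ℤ) : ℝ)| := by exact_mod_cast Int.one_le_abs hkl
    rw [show z - z' = ((k - l : ℤ) : ℝ) * τ by rw [hk, hl]; push_cast; ring, abs_mul,
      abs_of_pos (by linarith : 0 < τ)]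
    nlinarith
  · intro T' hT' hperT'
    obtain ⟨k, hk⟩ := hzero (a / γ + T') (by rw [hperT', hpz])
    have hk' : T' = k * τ := by linarith
    have hk0 : 0 < k := by
      by_contra h
      have : (k : ℝ) ≤ 0 := by exact_mod_cast not_lt.1 h
      nlinarith
    -- `k = 1` would make `p` both `τ`-periodic and `τ`-antiperiodic.
    have hk1 : k ≠ 1 := by
      rintro rfl
      have h1 := hperT' 0
      have h2 := hpa 0
      rw [hk'] at h1
      simp only [Int.cast_one, one_mul] at h1
      linarith
    have : (2 : ℝ) ≤ k := by exact_mod_cast (show (2 : ℤ) ≤ k by omega)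
    rw [hk']
    nlinarith
  · have e1 : 2 * c / δ = 2 * (c / δ) := by ring
    have e2 : 6 * a / γ = 2 * (3 * a / γ) := by ring
    have e3 : 2 * (γ - 4 * a) / δ = 2 * ((γ - 4 * a) / δ) := by ring
    rw [e1, e2, e3]
    linarith
end

section
/- Given reals a, c, δ, γ > 0 satisfying (i) c < min(a, δ), (ii) γ ≥ 4a and γ > δ, (iii) δ + (c/δ)·γ ≤ a, suppose f satisfies (H) and (H''). Let x be a solution on [-1,∞) of x'(t) = f(x(t-1)) whose initial segment φ satisfies φ(0) = -2a and -γ ≤ φ(s) ≤ -2a for all s ∈ [-1,0]. Then there exists τ₃ > 2 such that x(t + τ₃) = -x(t) for all t ≥ 0; in particular x(t + 2τ₃) = x(t) for all t ≥ 0. -/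
/-!
The solution can be followed explicitly over half a period; write `e = c / δ` and `r = a / γ`.

* On `[0, 1]` the delayed argument lies in `[-γ, -2a]`, so `x' = δ` and `x` rises from `-2a` to
  `-2a + δ`. On `[1, 1 + e]` the slope is between `0` and `γ`, and the condition
  `δ + (c / δ) γ ≤ a` keeps `x ≤ -a`.
* From time `1 + e` on, the delayed argument lies in `[-2a + c, -a]`, so `x' = γ`, until one time
  unit after the time `τ₁` at which `x = -a`. Hence `x` is affine on `[τ₁, τ₁ + 1]`, running from
  `-a` to `γ - a ≥ 3a`.
* On `[τ₁ + 1, τ₁ + 1 + 2r]` the delayed argument runs affinely from `-a` to `a`. As `f` is odd,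
  `x` is symmetric about the midpoint of this interval: it rises to a value at most `γ` and
  returns to `γ - a`. During the next `r` time units it loses at most `a`. So `x` stays in
  `[2a, γ]` on `[σ - 1, σ]`, where `σ = τ₁ + 1 + 3r`.
* Consequently `x' = -δ` from `σ` on until `x` reaches `2a`, at a time `τ₃`, and `x` is in
  `[2a, γ]` on `[τ₃ - 1, τ₃]`.

Thus `-x (· + τ₃)` solves the equation, as `f` is odd, with an initial segment of the same kind as
that of `x`. All such segments generate the same solution on `[0, ∞)` (method of steps), which
is the claim.
-/

open Set Filter

/-- Two-sided mean value inequality, with derivative bounds needed on the open interval only. -/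
lemma mvt_bounds {g g' : ℝ → ℝ} {s t m M : ℝ} (hst : s ≤ t) (hc : ContinuousOn g (Icc s t))
    (hd : ∀ u ∈ Ioo s t, HasDerivAt g (g' u) u) (hb : ∀ u ∈ Ioo s t, m ≤ g' u ∧ g' u ≤ M) :
    m * (t - s) ≤ g t - g s ∧ g t - g s ≤ M * (t - s) := by
  rcases hst.eq_or_lt with rfl | h
  · simp
  · obtain ⟨u, hu, he⟩ := exists_hasDerivAt_eq_slope g g' h hc hd
    have hp : 0 < t - s := by linarith
    have h2 : g t - g s = g' u * (t - s) := by rw [he]; field_simp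
    rw [h2]
    exact ⟨mul_le_mul_of_nonneg_right (hb u hu).1 hp.le,
      mul_le_mul_of_nonneg_right (hb u hu).2 hp.le⟩

lemma sol_bounds {f x : ℝ → ℝ} (hx : IsSolOn f x) {s t m M : ℝ} (hs : 0 ≤ s) (hst : s ≤ t)
    (hb : ∀ u, s < u → u < t → m ≤ f (x (u - 1)) ∧ f (x (u - 1)) ≤ M) :
    m * (t - s) ≤ x t - x s ∧ x t - x s ≤ M * (t - s) :=
  mvt_bounds (g' := fun u => f (x (u - 1))) hst
    (hx.1.mono fun u hu => by simp only [mem_Icc, mem_Ici] at *; linarith)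
    (fun u hu => hx.2 u (by linarith [hu.1])) fun u hu => hb u hu.1 hu.2

lemma sol_affine {f x : ℝ → ℝ} (hx : IsSolOn f x) {s t k : ℝ} (hs : 0 ≤ s) (hst : s ≤ t)
    (hb : ∀ u, s < u → u < t → f (x (u - 1)) = k) : x t = x s + k * (t - s) := by
  have h := sol_bounds hx (m := k) (M := k) hs hst fun u h1 h2 => by simp [hb u h1 h2]
  linarith [h.1, h.2]

/-- If the delayed argument is affine, running from `-a` to `a` in time `2 * r`, then `x` is
symmetric about the middle of the corresponding interval, because `f` is odd. -/
lemma sol_symm {f x : ℝ → ℝ} (hx : IsSolOn f x) (hodd : ∀ y, f (-y) = -f y)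
    {τ a γ r : ℝ} (hτ : 0 ≤ τ) (hrγ : r * γ = a)
    (hlin : ∀ t, τ ≤ t → t ≤ τ + 2 * r → x t = -a + γ * (t - τ))
    {t : ℝ} (h1 : τ + 1 + r ≤ t) (h2 : t ≤ τ + 1 + 2 * r) :
    x t = x (2 * (τ + 1 + r) - t) := by
  have h := mvt_bounds (g := fun u => x u - x (2 * (τ + 1 + r) - u)) (g' := fun _ => 0)
    (m := 0) (M := 0) h1 ?_ ?_ (by simp)
  · have e : 2 * (τ + 1 + r) - (τ + 1 + r) = τ + 1 + r := by ring
    simp only [e] at h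
    linarith [h.1, h.2]
  · refine ContinuousOn.sub (hx.1.mono ?_) (hx.1.comp (by fun_prop) ?_)
    · intro u hu; simp only [mem_Icc, mem_Ici] at *; linarith
    · intro u hu; simp only [mem_Icc, mem_Ici] at *; linarith
  · intro u hu
    obtain ⟨hu1, hu2⟩ := hu
    have d1 := hx.2 u (by linarith)
    have d2 := (hx.2 (2 * (τ + 1 + r) - u) (by linarith)).comp u
      ((hasDerivAt_id u).const_sub (2 * (τ + 1 + r)))
    have e1 := hlin (u - 1) (by linarith) (by linarith)
    have e2 := hlin (2 * (τ + 1 + r) - u - 1) (by linarith) (by linarith)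
    have e3 : x (2 * (τ + 1 + r) - u - 1) = -x (u - 1) := by
      rw [e1, e2, ← hrγ]; ring
    refine (d1.sub d2).congr_deriv ?_
    rw [e3, hodd]; ring

/-- A solution that has stayed in `[2a, γ]` for a whole time unit descends with
slope `-δ` until it reaches `2a`, at the time `τ`. -/
lemma descent {f x : ℝ → ℝ} (hx : IsSolOn f x) {a δ γ σ : ℝ} (hδ : 0 < δ)
    (hf : ∀ y ∈ Icc (2 * a) γ, f y = -δ) (hσ : 0 ≤ σ)
    (hseg : ∀ t, σ - 1 ≤ t → t ≤ σ → 2 * a ≤ x t ∧ x t ≤ γ) :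
    ∃ τ, σ ≤ τ ∧ x τ = 2 * a ∧ ∀ t, τ - 1 ≤ t → t ≤ τ → 2 * a ≤ x t ∧ x t ≤ γ := by
  obtain ⟨w, hw⟩ : ∃ w, w = (x σ - 2 * a) / δ := ⟨_, rfl⟩
  have hwδ : w * δ = x σ - 2 * a := by rw [hw]; field_simp
  have h0 := hseg σ (by linarith) le_rfl
  have hw0 : 0 ≤ w := by rw [hw]; exact div_nonneg (by linarith) hδ.le
  have key : ∀ n : ℕ, ∀ t, σ ≤ t → t ≤ σ + n → t ≤ σ + w → x t = x σ + -δ * (t - σ) := by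
    intro n
    induction n with
    | zero =>
      intro t h1 h2 _
      have : t = σ := by simp at h2; linarith
      subst this; ring
    | succ n ih =>
      intro t h1 h2 h3
      push_cast at h2
      refine sol_affine hx hσ h1 fun u hu1 hu2 => hf _ ?_
      by_cases hu : u - 1 ≤ σ
      · exact hseg _ (by linarith) hu
      · have := ih (u - 1) (by linarith) (by linarith) (by linarith)
        constructor <;> nlinarith
  have key' : ∀ t, σ ≤ t → t ≤ σ + w → x t = x σ + -δ * (t - σ) := by
    intro t h1 h2
    obtain ⟨n, hn⟩ := exists_nat_ge (t - σ)
    exact key n t h1 (by linarith) h2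
  refine ⟨σ + w, by linarith, ?_, fun t h1 h2 => ?_⟩
  · rw [key' _ (by linarith) le_rfl]; linarith
  · by_cases h : t ≤ σ
    · exact hseg t (by linarith) h
    · have := key' t (by linarith) h2
      constructor <;> nlinarith

set_option maxHeartbeats 2000000 in
theorem statement_12 (f : ℝ → ℝ) (a c δ γ : ℝ)
    (ha : 0 < a) (hc : 0 < c) (hδ : 0 < δ) (hγ : 0 < γ)
    (hi : c < min a δ) (hii : 4 * a ≤ γ ∧ δ < γ) (hiii : δ + (c / δ) * γ ≤ a)
    (hH : HypH f) (hH'' : HypH'' f a c δ γ)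
    (x : ℝ → ℝ) (hx : IsSolOn f x) (hx0 : x 0 = -(2 * a))
    (hseg : ∀ s ∈ Icc (-1 : ℝ) 0, -γ ≤ x s ∧ x s ≤ -(2 * a)) :
    ∃ τ₃ : ℝ, 2 < τ₃ ∧ (∀ t : ℝ, 0 ≤ t → x (t + τ₃) = -x t) ∧
      ∀ t : ℝ, 0 ≤ t → x (t + 2 * τ₃) = x t := by
  obtain ⟨hodd, hfb, hfγ, hfδ⟩ := hH''
  obtain ⟨-, hneg, -, -⟩ := hH
  obtain ⟨h4a, -⟩ := hii
  have hcδ : c < δ := lt_of_lt_of_le hi (min_le_right _ _)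
  have hf0 : f 0 = 0 := by have := hodd 0; simp at this; linarith
  have hfpos : ∀ y, 0 ≤ y → y ≤ 2 * a → -γ ≤ f y ∧ f y ≤ 0 := by
    intro y h1 h2
    refine ⟨(abs_le.1 (hfb y ⟨h1, h2⟩)).1, ?_⟩
    rcases h1.eq_or_lt with rfl | h
    · exact hf0.le
    · have := hneg y h.ne'
      by_contra! hcon
      nlinarith
  have hfneg : ∀ y, y ≤ 0 → -(2 * a) ≤ y → 0 ≤ f y ∧ f y ≤ γ := by
    intro y h1 h2
    have := hfpos (-y) (by linarith) (by linarith)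
    rw [hodd] at this
    constructor <;> linarith [this.1, this.2]
  have hfγ' : ∀ y, -(2 * a) + c ≤ y → y ≤ -a → f y = γ := by
    intro y h1 h2
    have := hfγ (-y) ⟨by linarith, by linarith⟩
    rw [hodd] at this; linarith
  have hfδ' : ∀ y, -γ ≤ y → y ≤ -(2 * a) → f y = δ := by
    intro y h1 h2
    have := hfδ (-y) ⟨by linarith, by linarith⟩
    rw [hodd] at this; linarith
  obtain ⟨e, he⟩ : ∃ e, e = c / δ := ⟨_, rfl⟩
  rw [← he] at hiii
  have heδ : e * δ = c := by rw [he]; field_simp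
  have he0 : 0 < e := by rw [he]; positivity
  have he1 : e < 1 := by rw [he, div_lt_one hδ]; exact hcδ
  obtain ⟨r, hr⟩ : ∃ r, r = a / γ := ⟨_, rfl⟩
  have hrγ : r * γ = a := by rw [hr]; field_simp
  have hr0 : 0 < r := by rw [hr]; positivity
  have hr4 : 4 * r ≤ 1 := by nlinarith
  have p1 : ∀ t, 0 ≤ t → t ≤ 1 → x t = -(2 * a) + δ * t := by
    intro t h1 h2
    have := sol_affine hx (k := δ) le_rfl h1 fun u hu1 hu2 => by
      have := hseg (u - 1) ⟨by linarith, by linarith⟩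
      exact hfδ' _ this.1 this.2
    rw [this, hx0]; ring
  have x1 : x 1 = -(2 * a) + δ := by rw [p1 1 (by norm_num) le_rfl]; ring
  have p2 : ∀ t, 1 ≤ t → t ≤ 1 + e → -(2 * a) + δ ≤ x t ∧ x t ≤ -a := by
    intro t h1 h2
    have := sol_bounds hx (m := 0) (M := γ) (by norm_num) h1 fun u hu1 hu2 => by
      have h := p1 (u - 1) (by linarith) (by linarith)
      apply hfneg <;> nlinarith
    constructor <;> nlinarith [this.1, this.2]
  have p12 : ∀ t, e ≤ t → t ≤ 1 + e → -(2 * a) + c ≤ x t ∧ x t ≤ -a := by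
    intro t h1 h2
    rcases le_total t 1 with h | h
    · have := p1 t (by linarith) h
      constructor <;> nlinarith
    · have := p2 t h h2
      constructor <;> linarith [this.1, this.2]
  obtain ⟨q, hq⟩ : ∃ q, q = (-a - x (1 + e)) / γ := ⟨_, rfl⟩
  have hqγ : q * γ = -a - x (1 + e) := by rw [hq]; field_simp
  have hxe := p2 (1 + e) (by linarith) le_rfl
  have hq0 : 0 ≤ q := by rw [hq]; exact div_nonneg (by linarith [hxe.2]) hγ.le
  have hqr : q ≤ r := by
    by_contra! h
    nlinarith [hxe.1]
  obtain ⟨τ, hτ⟩ : ∃ τ, τ = 1 + e + q := ⟨_, rfl⟩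
  have p3 : ∀ t, 1 + e ≤ t → t ≤ τ → x t = x (1 + e) + γ * (t - (1 + e)) := by
    intro t h1 h2
    refine sol_affine hx (by linarith) h1 fun u hu1 hu2 => ?_
    have := p12 (u - 1) (by linarith) (by linarith)
    exact hfγ' _ this.1 this.2
  have xτ : x τ = -a := by
    rw [p3 τ (by linarith) le_rfl, hτ]; linarith
  have p4 : ∀ t, τ ≤ t → t ≤ τ + 1 → x t = -a + γ * (t - τ) := by
    intro t h1 h2
    rw [← xτ]
    refine sol_affine hx (by linarith) h1 fun u hu1 hu2 => ?_
    rcases le_total (u - 1) (1 + e) with h | h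
    · have := p12 (u - 1) (by linarith) h
      exact hfγ' _ this.1 this.2
    · have := p3 (u - 1) h (by linarith)
      apply hfγ' <;> nlinarith [hxe.1]
  have xτ1 : x (τ + 1) = γ - a := by rw [p4 _ (by linarith) le_rfl]; ring
  have p5 : ∀ t, τ + 1 ≤ t → t ≤ τ + 1 + r → γ - a ≤ x t ∧ x t ≤ γ := by
    intro t h1 h2
    have := sol_bounds hx (m := 0) (M := γ) (by linarith) h1 fun u hu1 hu2 => by
      have h := p4 (u - 1) (by linarith) (by linarith)
      apply hfneg <;> nlinarith
    constructor <;> nlinarith [this.1, this.2]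
  have p6 : ∀ t, τ + 1 + r ≤ t → t ≤ τ + 1 + 2 * r → γ - a ≤ x t ∧ x t ≤ γ := by
    intro t h1 h2
    rw [sol_symm hx hodd (by linarith) hrγ
      (fun t h1 h2 => p4 t h1 (by linarith)) h1 h2]
    exact p5 _ (by linarith) (by linarith)
  have p7 : ∀ t, τ + 1 + 2 * r ≤ t → t ≤ τ + 1 + 3 * r → 2 * a ≤ x t ∧ x t ≤ γ := by
    intro t h1 h2
    have := sol_bounds hx (m := -γ) (M := 0) (by linarith) h1 fun u hu1 hu2 => by
      have h := p4 (u - 1) (by linarith) (by linarith)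
      apply hfpos <;> nlinarith
    have h0 := p6 (τ + 1 + 2 * r) (by linarith) le_rfl
    constructor <;> nlinarith [this.1, this.2, h0.1, h0.2]
  obtain ⟨τ₃, hτ₃, hx3, hs3⟩ := descent hx hδ hfδ (σ := τ + 1 + 3 * r) (by linarith) (by
    intro t h1 h2
    rcases le_total t (τ + 1) with h | h
    · have := p4 t (by linarith) h
      constructor <;> nlinarith
    rcases le_total t (τ + 1 + r) with h' | h'
    · have := p5 t h h'
      constructor <;> linarith [this.1, this.2]
    rcases le_total t (τ + 1 + 2 * r) with hr2 | hr2
    · have := p6 t h' hr2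
      constructor <;> linarith [this.1, this.2]
    · exact p7 t hr2 h2)
  -- Method of steps: `x (· + τ₃) + x` vanishes at `0` and has zero derivative on each `[0, n]`.
  have key : ∀ n : ℕ, ∀ t : ℝ, 0 ≤ t → t ≤ n → x (t + τ₃) = -x t := by
    intro n
    induction n with
    | zero =>
      intro t h1 h2
      have : t = 0 := by simp at h2; linarith
      subst this
      rw [zero_add, hx3, hx0]; ring
    | succ n ih =>
      intro t h1 h2
      push_cast at h2
      have h := mvt_bounds (g := fun u => x (u + τ₃) + x u) (g' := fun _ => 0)
        (m := 0) (M := 0) h1 ?_ ?_ (by simp)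
      · simp only [zero_add, hx3, hx0] at h
        linarith [h.1, h.2]
      · refine ContinuousOn.add (hx.1.comp (by fun_prop) ?_) (hx.1.mono ?_)
        · intro u hu; simp only [mem_Icc, mem_Ici] at *; linarith
        · intro u hu; simp only [mem_Icc, mem_Ici] at *; linarith
      · rintro u ⟨hu1, hu2⟩
        have d1 := hx.2 u hu1
        have d2 := (hx.2 (u + τ₃) (by linarith)).comp_add_const u τ₃
        refine (d2.add d1).congr_deriv ?_
        rcases le_total u 1 with h | h
        · have a1 := hseg (u - 1) ⟨by linarith, by linarith⟩
          rw [hfδ _ (hs3 (u + τ₃ - 1) (by linarith) (by linarith)), hfδ' _ a1.1 a1.2]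
          ring
        · have := ih (u - 1) (by linarith) (by linarith)
          rw [show u + τ₃ - 1 = u - 1 + τ₃ by ring, this, hodd]
          ring
  have key' : ∀ t : ℝ, 0 ≤ t → x (t + τ₃) = -x t := by
    intro t h1
    obtain ⟨n, hn⟩ := exists_nat_ge t
    exact key n t h1 hn
  refine ⟨τ₃, by linarith, key', fun t ht => ?_⟩
  rw [show t + 2 * τ₃ = t + τ₃ + τ₃ by ring, key' _ (by linarith), key' t ht, neg_neg]
end
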